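/- arXiv:1409.3666 — 2 statements merged into one kernel-verified Lean document; each statement's English description precedes it below -/
import Mathlib

section
/- For every integer b ≥ 2 and every t ∈ ℕ₀, there exists a constant C > 0 (depending only on b and t) with the following property: for all m, n ∈ ℕ with t ≤ m ≤ n and all n×m matrices C₁, C₂ over Z_b whose dual net P⊥ satisfies μ₁(k₁) + μ₁(k₂) > m − t for every (k₁, k₂) ∈ P⊥ with (k₁, k₂) ≠ (0, 0), the two-dimensional digital net P generated by C₁, C₂ satisfies L_∞(P) ≤ C·m / b^m. -/
open MeasureTheory
open scoped BigOperators

/-- The point of the two-dimensional digital net over `ZMod b` with generating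
matrices `C₁, C₂` indexed by `(a₁, ..., a_m) ∈ {0, ..., b-1}^m`. -/
noncomputable def digitalNetPoint (b m n : ℕ) (C1 C2 : Matrix (Fin n) (Fin m) (ZMod b))
    (a : Fin m → Fin b) : ℝ × ℝ :=
  (∑ i : Fin n, ((Matrix.mulVec C1 (fun j => ((a j : ℕ) : ZMod b)) i).val : ℝ) /
      (b : ℝ) ^ ((i : ℕ) + 1),
   ∑ i : Fin n, ((Matrix.mulVec C2 (fun j => ((a j : ℕ) : ZMod b)) i).val : ℝ) /
      (b : ℝ) ^ ((i : ℕ) + 1))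

/-- Local discrepancy function of the finite point family `P` (indexed by a fintype,
so that points are counted with multiplicity) at `y`. -/
noncomputable def discAt {ι : Type} [Fintype ι] (P : ι → ℝ × ℝ) (y : ℝ × ℝ) : ℝ :=
  ((Finset.univ.filter (fun i => (P i).1 < y.1 ∧ (P i).2 < y.2)).card : ℝ) /
    (Fintype.card ι : ℝ) - y.1 * y.2

/-- `L_∞` discrepancy of the finite point family `P`. -/
noncomputable def LinfDisc {ι : Type} [Fintype ι] (P : ι → ℝ × ℝ) : ℝ :=
  ⨆ y : ((Set.Ico (0:ℝ) 1) ×ˢ (Set.Ico (0:ℝ) 1) : Set (ℝ × ℝ)), |discAt P (y : ℝ × ℝ)|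

/-- The vector of the first `n` base-`b` digits of `k ∈ ℕ` (least significant first),
viewed in `ZMod b`. -/
def digitVec (b n k : ℕ) : Fin n → ZMod b := fun i => (((k / b ^ (i : ℕ)) % b : ℕ) : ZMod b)

/-- The NRT weight `μ₁(k)`: the largest index `i ≥ 1` such that the `i`-th base-`b`
digit of `k` is nonzero, and `μ₁(0) = 0`. -/
def mu1 (b k : ℕ) : ℕ := if k = 0 then 0 else Nat.log b k + 1



theorem dn_char_vec {b : ℕ} [NeZero b] {κ : Type} [Fintype κ] [DecidableEq κ] (z : κ → ZMod b) :
    ∑ u : κ → ZMod b, ZMod.stdAddChar (u ⬝ᵥ z) = if z = 0 then ((b : ℂ) ^ Fintype.card κ) else 0 := by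
  have h1 : ∀ u : κ → ZMod b, ZMod.stdAddChar (u ⬝ᵥ z) = ∏ i, ZMod.stdAddChar (u i * z i) := by
    intro u
    have : ∀ s : Finset κ, (ZMod.stdAddChar (∑ i ∈ s, u i * z i) : ℂ)
        = ∏ i ∈ s, ZMod.stdAddChar (u i * z i) := by
      intro s
      induction s using Finset.induction_on with
      | empty => simp
      | insert a s ha ih => rw [Finset.sum_insert ha, Finset.prod_insert ha,
          AddChar.map_add_eq_mul, ih]
    exact this _
  simp_rw [h1]
  have h2 := Finset.prod_univ_sum (fun _ : κ => (Finset.univ : Finset (ZMod b)))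
    (fun i x => ZMod.stdAddChar (x * z i))
  rw [Fintype.piFinset_univ] at h2
  rw [← h2]
  have h3 : ∀ i, ∑ x : ZMod b, ZMod.stdAddChar (x * z i) = if z i = 0 then (b : ℂ) else 0 := by
    intro i
    have := AddChar.sum_mulShift (z i) (ZMod.isPrimitive_stdAddChar b)
    rw [this]; simp [ZMod.card]
  simp_rw [h3]
  split_ifs with hz
  · subst hz; simp
  · obtain ⟨i, hi⟩ := Function.ne_iff.mp hz
    exact Finset.prod_eq_zero (Finset.mem_univ i) (if_neg hi)

theorem dn_count {b : ℕ} [NeZero b] {κ ν : Type} [Fintype κ] [DecidableEq κ] [Fintype ν]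
    [DecidableEq ν] (A : Matrix κ ν (ZMod b))
    (hA : ∀ u, Matrix.mulVec A.transpose u = 0 → u = 0) (y : κ → ZMod b) :
    (Finset.univ.filter (fun x : ν → ZMod b => Matrix.mulVec A x = y)).card * b ^ Fintype.card κ
      = b ^ Fintype.card ν := by
  have key : ∑ x : ν → ZMod b, ∑ u : κ → ZMod b,
      (ZMod.stdAddChar (u ⬝ᵥ (Matrix.mulVec A x - y)) : ℂ) = (b : ℂ) ^ Fintype.card ν := by
    rw [Finset.sum_comm]
    have h : ∀ u : κ → ZMod b, ∑ x : ν → ZMod b,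
      (ZMod.stdAddChar (u ⬝ᵥ (Matrix.mulVec A x - y)) : ℂ)
        = if u = 0 then (b : ℂ) ^ Fintype.card ν else 0 := by
      intro u
      have h1 : ∀ x : ν → ZMod b, (ZMod.stdAddChar (u ⬝ᵥ (Matrix.mulVec A x - y)) : ℂ)
          = ZMod.stdAddChar (-(u ⬝ᵥ y)) * ZMod.stdAddChar (x ⬝ᵥ Matrix.mulVec A.transpose u) := by
        intro x
        rw [← AddChar.map_add_eq_mul, dotProduct_sub, Matrix.dotProduct_mulVec,
          Matrix.mulVec_transpose, dotProduct_comm x]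
        congr 1; ring
      simp_rw [h1]
      rw [← Finset.mul_sum, dn_char_vec]
      by_cases hu : u = 0
      · subst hu; simp
      · rw [if_neg (fun h => hu (hA u h)), if_neg hu, mul_zero]
    simp_rw [h]
    simp
  simp_rw [dn_char_vec, sub_eq_zero] at key
  rw [← Finset.sum_filter, Finset.sum_const, nsmul_eq_mul] at key
  exact_mod_cast key

theorem dn_dig {b i : ℕ} [NeZero b] (u : Fin i → ZMod b) :
    ∃ k < b ^ i, ∀ l : Fin i, ((k / b ^ (l : ℕ) % b : ℕ) : ZMod b) = u l := by
  have hb : 0 < b := Nat.pos_of_ne_zero (NeZero.ne b)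
  let f : Fin i → Fin b := fun l => ⟨(u l).val, ZMod.val_lt _⟩
  refine ⟨finFunctionFinEquiv f, (finFunctionFinEquiv f).2, fun l => ?_⟩
  have h := congrArg (fun g => (g l : ℕ)) (finFunctionFinEquiv.symm_apply_apply f)
  simp only [finFunctionFinEquiv_symm_apply_val] at h
  rw [h]
  simp [f]

theorem dn_sum_fin {R : Type} [AddCommMonoid R] {n i : ℕ} (h : i ≤ n) (f : Fin n → R)
    (hf : ∀ l : Fin n, i ≤ (l : ℕ) → f l = 0) : ∑ l, f l = ∑ l : Fin i, f (Fin.castLE h l) := by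
  obtain ⟨k, rfl⟩ := Nat.exists_eq_add_of_le h
  rw [Fin.sum_univ_add]
  rw [Finset.sum_eq_zero (s := (Finset.univ : Finset (Fin k))) (fun l _ => hf _ (by simp)), add_zero]
  rfl

/-- floor recursion -/
theorem dn_floor {b : ℕ} (hb : 2 ≤ b) (y : ℕ → ℕ) (hy : ∀ l, y l < b) (n : ℕ) :
    ∃ F : ℕ → ℕ, F 0 = 0 ∧ (∀ l, F (l + 1) = b * F l + y l) ∧ ∀ i ≤ n,
      ⌊(b : ℝ) ^ i * ∑ l ∈ Finset.range n, (y l : ℝ) / (b : ℝ) ^ (l + 1)⌋₊ = F i := by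
  have hb0 : (0 : ℝ) < b := by positivity
  obtain ⟨F, hF0, hF⟩ : ∃ F : ℕ → ℕ, F 0 = 0 ∧ ∀ l, F (l + 1) = b * F l + y l :=
    ⟨fun l => Nat.rec (motive := fun _ => ℕ) 0 (fun l r => b * r + y l) l, rfl, fun l => rfl⟩
  refine ⟨F, hF0, hF, ?_⟩
  have hS : ∀ i, (b : ℝ) ^ i * ∑ l ∈ Finset.range i, (y l : ℝ) / (b : ℝ) ^ (l + 1) = F i := by
    intro i
    induction i with
    | zero => simp [hF0]
    | succ i ih =>
      rw [Finset.sum_range_succ, hF]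
      push_cast
      rw [← ih]
      field_simp
      ring
  have hT : ∀ i k, (∑ l ∈ Finset.range i, (y l : ℝ) / (b : ℝ) ^ (l + 1)) ≤
        (∑ l ∈ Finset.range (i + k), (y l : ℝ) / (b : ℝ) ^ (l + 1)) ∧
      (∑ l ∈ Finset.range (i + k), (y l : ℝ) / (b : ℝ) ^ (l + 1)) ≤
        (∑ l ∈ Finset.range i, (y l : ℝ) / (b : ℝ) ^ (l + 1)) + 1 / (b : ℝ) ^ i - 1 / (b : ℝ) ^ (i + k) := by
    intro i k
    induction k with
    | zero => simp
    | succ k ih =>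
      rw [← add_assoc, Finset.sum_range_succ]
      have h1 : (y (i + k) : ℝ) + 1 ≤ b := by exact_mod_cast hy (i + k)
      have h2 : (0 : ℝ) ≤ (y (i + k) : ℝ) / (b : ℝ) ^ (i + k + 1) := by positivity
      have h3 : (y (i + k) : ℝ) / (b : ℝ) ^ (i + k + 1) ≤ 1 / (b : ℝ) ^ (i + k) - 1 / (b : ℝ) ^ (i + k + 1) := by
        have : 1 / (b : ℝ) ^ (i + k) = b / (b : ℝ) ^ (i + k + 1) := by
          field_simp
          ring
        rw [this, ← sub_div]
        gcongr
        linarith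
      constructor <;> linarith [ih.1, ih.2]
  intro i hi
  obtain ⟨k, rfl⟩ := Nat.exists_eq_add_of_le hi
  obtain ⟨h1, h2⟩ := hT i k
  have hp : (0 : ℝ) < (b : ℝ) ^ i := by positivity
  have hq : (0 : ℝ) < 1 / (b : ℝ) ^ (i + k) := by positivity
  rw [Nat.floor_eq_iff (by positivity), ← hS i]
  constructor
  · gcongr
  · have : (b : ℝ) ^ i * ∑ l ∈ Finset.range (i + k), (y l : ℝ) / (b : ℝ) ^ (l + 1) <
      (b : ℝ) ^ i * ((∑ l ∈ Finset.range i, (y l : ℝ) / (b : ℝ) ^ (l + 1)) + 1 / (b : ℝ) ^ i) := by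
      gcongr; linarith
    rw [mul_add, mul_one_div_cancel hp.ne'] at this
    exact this

theorem dn_rec {b : ℕ} (hb : 2 ≤ b) (i : ℕ) : ∀ c < b ^ i, ∃ w : Fin i → ℕ, (∀ l, w l < b) ∧
    ∀ (y F : ℕ → ℕ), (∀ l, y l < b) → F 0 = 0 → (∀ l, F (l + 1) = b * F l + y l) →
      (F i = c ↔ ∀ l : Fin i, y l = w l) := by
  induction i with
  | zero =>
    intro c hc
    refine ⟨fun _ => 0, fun l => l.elim0, fun y F hy h0 hF => ?_⟩
    simp at hc
    simp [h0, hc]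
  | succ i ih =>
    intro c hc
    have hc' : c / b < b ^ i := Nat.div_lt_of_lt_mul (by rw [pow_succ] at hc; linarith)
    obtain ⟨w, hwb, hw⟩ := ih _ hc'
    refine ⟨Fin.snoc w (c % b), ?_, fun y F hy h0 hF => ?_⟩
    · intro l
      refine Fin.lastCases ?_ (fun l => ?_) l
      · simp only [Fin.snoc_last]; exact Nat.mod_lt _ (by omega)
      · simp only [Fin.snoc_castSucc]; exact hwb l
    · rw [Fin.forall_fin_succ']
      simp only [Fin.snoc_castSucc, Fin.snoc_last, Fin.val_castSucc, Fin.val_last]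
      rw [← hw y F hy h0 hF, hF]
      constructor
      · rintro rfl
        have := hy i
        constructor
        · rw [Nat.mul_add_div (by omega), Nat.div_eq_of_lt this, add_zero]
        · rw [Nat.mul_add_mod, Nat.mod_eq_of_lt this]
      · rintro ⟨h1, h2⟩
        rw [h1, h2, Nat.div_add_mod]

theorem dn_cardsum {ι : Type} [Fintype ι] [DecidableEq ι] (p : ι → Prop) [DecidablePred p]
    (g : ι → ℕ) (f : ℕ) :
    (Finset.univ.filter (fun a => p a ∧ g a < f)).card =
      ∑ e ∈ Finset.range f, (Finset.univ.filter (fun a => p a ∧ g a = e)).card := by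
  rw [Finset.card_eq_sum_card_fiberwise (f := g) (t := Finset.range f)]
  · refine Finset.sum_congr rfl fun e he => ?_
    congr 1
    ext a
    simp only [Finset.mem_filter, Finset.mem_univ, true_and]
    simp only [Finset.mem_range] at he
    constructor
    · rintro ⟨⟨h1, h2⟩, h3⟩; exact ⟨h1, h3⟩
    · rintro ⟨h1, h3⟩; exact ⟨⟨h1, h3 ▸ he⟩, h3⟩
  · intro a ha
    simpa using (Finset.mem_filter.mp ha).2.2

theorem dn_net {ι : Type} [Fintype ι] (P : ι → ℝ × ℝ) (hP1 : ∀ a, 0 ≤ (P a).1)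
    (b d T : ℕ) (hb : 2 ≤ b)
    (hnet : ∀ i j c e, i + j = d → c < b ^ i → e < b ^ j →
      (Finset.univ.filter (fun a => ⌊(b : ℝ) ^ i * (P a).1⌋₊ = c ∧
        ⌊(b : ℝ) ^ j * (P a).2⌋₊ = e)).card = T)
    (y1 y2 : ℝ) (h10 : 0 ≤ y1) (h11 : y1 < 1) (h20 : 0 ≤ y2) (h21 : y2 < 1) :
    |((Finset.univ.filter (fun a => (P a).1 < y1 ∧ (P a).2 < y2)).card : ℝ)
      - T * (b : ℝ) ^ d * (y1 * y2)| ≤ T * (d * b + 1) := by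
  classical
  have hb0 : (0 : ℝ) < b := by positivity
  have flt : ∀ (y : ℝ) (j : ℕ), 0 ≤ y → y < 1 → ⌊(b : ℝ) ^ j * y⌋₊ < b ^ j := by
    intro y j h0 h1
    rw [Nat.floor_lt (by positivity)]
    push_cast
    exact mul_lt_of_lt_one_right (by positivity) h1
  -- single strip
  have hE : ∀ i j c, i + j = d → c < b ^ i →
      ((⌊(b : ℝ) ^ j * y2⌋₊ : ℝ) * T ≤
        ((Finset.univ.filter (fun a => ⌊(b : ℝ) ^ i * (P a).1⌋₊ = c ∧ (P a).2 < y2)).card : ℝ)) ∧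
      (((Finset.univ.filter (fun a => ⌊(b : ℝ) ^ i * (P a).1⌋₊ = c ∧ (P a).2 < y2)).card : ℝ) ≤
        ((⌊(b : ℝ) ^ j * y2⌋₊ : ℝ) + 1) * T) := by
    intro i j c hij hc
    have hf := flt y2 j h20 h21
    set f := ⌊(b : ℝ) ^ j * y2⌋₊ with hfdef
    have hcount : ∀ g ≤ b ^ j, (Finset.univ.filter (fun a => ⌊(b : ℝ) ^ i * (P a).1⌋₊ = c ∧
        ⌊(b : ℝ) ^ j * (P a).2⌋₊ < g)).card = g * T := by
      intro g hg
      rw [dn_cardsum, Finset.sum_congr rfl (fun e he => hnet i j c e hij hc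
        (lt_of_lt_of_le (Finset.mem_range.mp he) hg))]
      simp
    constructor
    · have := hcount f hf.le
      have h2 : f * T ≤ (Finset.univ.filter (fun a => ⌊(b : ℝ) ^ i * (P a).1⌋₊ = c ∧ (P a).2 < y2)).card := by
        rw [← this]
        apply Finset.card_le_card
        intro a
        simp only [Finset.mem_filter, Finset.mem_univ, true_and]
        rintro ⟨h1, h2⟩
        refine ⟨h1, ?_⟩
        by_contra h
        push Not at h
        apply absurd h2
        push Not
        exact Nat.floor_le_floor (by gcongr)
      exact_mod_cast h2
    · have := hcount (f + 1) hf
      have h2 : (Finset.univ.filter (fun a => ⌊(b : ℝ) ^ i * (P a).1⌋₊ = c ∧ (P a).2 < y2)).card ≤ (f + 1) * T := by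
        rw [← this]
        apply Finset.card_le_card
        intro a
        simp only [Finset.mem_filter, Finset.mem_univ, true_and]
        rintro ⟨h1, h2⟩
        refine ⟨h1, Nat.lt_succ_of_le ?_⟩
        exact Nat.floor_le_floor (by gcongr)
      exact_mod_cast h2
  have hE' : ∀ i j c, i + j = d → c < b ^ i →
      |((Finset.univ.filter (fun a => ⌊(b : ℝ) ^ i * (P a).1⌋₊ = c ∧ (P a).2 < y2)).card : ℝ)
        - T * ((b : ℝ) ^ j * y2)| ≤ T := by
    intro i j c hij hc
    obtain ⟨h1, h2⟩ := hE i j c hij hc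
    have h3 := Nat.floor_le (a := (b : ℝ) ^ j * y2) (by positivity)
    have h4 := (Nat.lt_floor_add_one ((b : ℝ) ^ j * y2)).le
    have h5 := mul_le_mul_of_nonneg_left h3 (Nat.cast_nonneg (α := ℝ) T)
    have h6 := mul_le_mul_of_nonneg_left h4 (Nat.cast_nonneg (α := ℝ) T)
    rw [abs_le]
    constructor <;> linarith
  have hG : ∀ i j, i + j = d → ∀ c < b ^ i,
      |((Finset.univ.filter (fun a => (P a).2 < y2 ∧ ⌊(b : ℝ) ^ i * (P a).1⌋₊ < c)).card : ℝ)
        - T * ((b : ℝ) ^ j * c * y2)| ≤ T * (i * b) := by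
    intro i
    induction i with
    | zero =>
      intro j hj c hc
      simp at hc
      subst hc
      simp
    | succ i ih =>
      intro j hj c hc
      have hq : c / b < b ^ i := Nat.div_lt_of_lt_mul (by rw [pow_succ] at hc; linarith)
      have hr : c % b < b := Nat.mod_lt _ (by omega)
      have hc' : b * (c / b) + c % b = c := Nat.div_add_mod c b
      generalize c / b = q at *
      generalize c % b = r at *
      have ih' := ih (j + 1) (by omega) q hq
      have step : ∀ s, b * q + s ≤ c →
        |((Finset.univ.filter (fun a => (P a).2 < y2 ∧ ⌊(b : ℝ) ^ (i + 1) * (P a).1⌋₊ < b * q + s)).card : ℝ)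
        - T * ((b : ℝ) ^ j * (b * q + s : ℕ) * y2)| ≤ T * (i * b) + T * s := by
        intro s
        induction s with
        | zero =>
          intro _
          have he : (Finset.univ.filter (fun a => (P a).2 < y2 ∧ ⌊(b : ℝ) ^ (i + 1) * (P a).1⌋₊ < b * q + 0))
            = (Finset.univ.filter (fun a => (P a).2 < y2 ∧ ⌊(b : ℝ) ^ i * (P a).1⌋₊ < q)) := by
            ext a
            simp only [Finset.mem_filter, Finset.mem_univ, true_and, add_zero]
            have := hP1 a
            rw [Nat.floor_lt (by positivity), Nat.floor_lt (by positivity), pow_succ']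
            push_cast
            rw [mul_assoc, mul_lt_mul_iff_right₀ hb0]
          rw [he]
          have e2 : (b : ℝ) ^ j * ((b * q + 0 : ℕ) : ℝ) * y2 = (b : ℝ) ^ (j + 1) * q * y2 := by
            push_cast; ring
          rw [e2]
          simpa using ih'
        | succ s ihs =>
          intro hs
          have h1 := ihs (by omega)
          have h2 := hE' (i + 1) j (b * q + s) hj (by omega)
          rw [dn_cardsum] at h1 ⊢
          rw [← add_assoc, Finset.sum_range_succ]
          simp only [and_comm (a := (_ : ℝ) < y2)] at h1 ⊢
          rw [abs_le] at *
          push_cast at *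
          constructor <;> linarith
      have h := step r hc'.le
      rw [hc'] at h
      refine h.trans ?_
      have : (r : ℝ) ≤ b := by exact_mod_cast hr.le
      have := mul_le_mul_of_nonneg_left this (Nat.cast_nonneg (α := ℝ) T)
      push_cast
      linarith
  have hc := flt y1 d h10 h11
  have g := hG d 0 (by omega) _ hc
  have e := (hE d 0 _ (by omega) hc).2
  have hf0 : ⌊(b : ℝ) ^ 0 * y2⌋₊ = 0 := by simpa using flt y2 0 h20 h21
  rw [hf0] at e
  have h3 := Nat.floor_le (a := (b : ℝ) ^ d * y1) (by positivity)
  have h4 := (Nat.lt_floor_add_one ((b : ℝ) ^ d * y1)).le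
  set c := ⌊(b : ℝ) ^ d * y1⌋₊ with hcdef
  have lo : (Finset.univ.filter (fun a => (P a).2 < y2 ∧ ⌊(b : ℝ) ^ d * (P a).1⌋₊ < c)).card ≤
      (Finset.univ.filter (fun a => (P a).1 < y1 ∧ (P a).2 < y2)).card := by
    apply Finset.card_le_card
    intro a
    simp only [Finset.mem_filter, Finset.mem_univ, true_and]
    rintro ⟨h1, h2⟩
    refine ⟨?_, h1⟩
    by_contra h
    push Not at h
    apply absurd h2
    push Not
    exact Nat.floor_le_floor (by gcongr)
  have up : (Finset.univ.filter (fun a => (P a).1 < y1 ∧ (P a).2 < y2)).card ≤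
      (Finset.univ.filter (fun a => (P a).2 < y2 ∧ ⌊(b : ℝ) ^ d * (P a).1⌋₊ < c)).card +
      (Finset.univ.filter (fun a => ⌊(b : ℝ) ^ d * (P a).1⌋₊ = c ∧ (P a).2 < y2)).card := by
    refine le_trans (Finset.card_le_card ?_) (Finset.card_union_le _ _)
    intro a
    simp only [Finset.mem_filter, Finset.mem_univ, true_and, Finset.mem_union]
    rintro ⟨h1, h2⟩
    have : ⌊(b : ℝ) ^ d * (P a).1⌋₊ ≤ c := Nat.floor_le_floor (by gcongr)
    rcases this.lt_or_eq with h | h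
    · exact Or.inl ⟨h2, h⟩
    · exact Or.inr ⟨h, h2⟩
  have lo' : ((_ : ℕ) : ℝ) ≤ ((_ : ℕ) : ℝ) := Nat.cast_le.mpr lo
  have up' : ((_ : ℕ) : ℝ) ≤ ((_ : ℕ) : ℝ) := Nat.cast_le.mpr up
  have hT := Nat.cast_nonneg (α := ℝ) T
  have h5 := mul_le_mul_of_nonneg_left h3 (mul_nonneg hT h20)
  have h6 := mul_le_mul_of_nonneg_left h4 (mul_nonneg hT h20)
  have h7 := mul_le_mul_of_nonneg_left h21.le hT
  push_cast at up' e
  rw [abs_le] at *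
  simp only [pow_zero, one_mul] at g
  constructor <;> nlinarith

/-- Floor condition as a digit condition for one coordinate. -/
theorem dn_coord {b m n : ℕ} [NeZero b] (hb : 2 ≤ b) (M : Matrix (Fin n) (Fin m) (ZMod b))
    (i : ℕ) (hi : i ≤ n) (c : ℕ) (hc : c < b ^ i) :
    ∃ w : Fin i → ZMod b, ∀ x : Fin m → ZMod b,
      (⌊(b : ℝ) ^ i * ∑ l : Fin n, ((Matrix.mulVec M x l).val : ℝ) / (b : ℝ) ^ ((l : ℕ) + 1)⌋₊ = c ↔
        ∀ l : Fin i, Matrix.mulVec M x (Fin.castLE hi l) = w l) := by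
  obtain ⟨w, hwb, hw⟩ := dn_rec hb i c hc
  refine ⟨fun l => (w l : ZMod b), fun x => ?_⟩
  let y : ℕ → ℕ := fun l => if h : l < n then (Matrix.mulVec M x ⟨l, h⟩).val else 0
  have hy : ∀ l, y l < b := by
    intro l
    simp only [y]
    split_ifs
    · exact ZMod.val_lt _
    · omega
  obtain ⟨F, hF0, hF, hFl⟩ := dn_floor hb y hy n
  have hs : ∑ l : Fin n, ((Matrix.mulVec M x l).val : ℝ) / (b : ℝ) ^ ((l : ℕ) + 1)
      = ∑ l ∈ Finset.range n, (y l : ℝ) / (b : ℝ) ^ (l + 1) := by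
    rw [← Fin.sum_univ_eq_sum_range (fun l => (y l : ℝ) / (b : ℝ) ^ (l + 1))]
    refine Finset.sum_congr rfl fun l _ => ?_
    simp [y]
  rw [hs, hFl i hi, hw y F hy hF0 hF]
  refine forall_congr' fun l => ?_
  have hl : (l : ℕ) < n := lt_of_lt_of_le l.2 hi
  have : y l = (Matrix.mulVec M x (Fin.castLE hi l)).val := by
    simp only [y, dif_pos hl]
    rfl
  rw [this]
  constructor
  · intro h
    show _ = ((w l : ℕ) : ZMod b)
    rw [← h, ZMod.natCast_zmod_val]
  · intro h
    rw [h, ZMod.val_natCast_of_lt (hwb l)]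

theorem dn_mulVec {b m n : ℕ} [NeZero b] (hb : 2 ≤ b) (M : Matrix (Fin n) (Fin m) (ZMod b))
    (i : ℕ) (hi : i ≤ n) (u : Fin i → ZMod b) :
    ∃ k < b ^ i, (k = 0 → u = 0) ∧ ∀ q, Matrix.mulVec M.transpose (digitVec b n k) q =
      ∑ l : Fin i, M (Fin.castLE hi l) q * u l := by
  obtain ⟨k, hk, hd⟩ := dn_dig u
  refine ⟨k, hk, ?_, ?_⟩
  · rintro rfl
    ext1 l
    simpa using (hd l).symm
  · intro q
    rw [Matrix.mulVec, dotProduct, dn_sum_fin hi]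
    · refine Finset.sum_congr rfl fun l _ => ?_
      rw [← hd l]
      rfl
    · intro l hl
      have : k / b ^ (l : ℕ) = 0 :=
        Nat.div_eq_of_lt (lt_of_lt_of_le hk (Nat.pow_le_pow_right (by omega) hl))
      simp [digitVec, this]

theorem dn_mu1 {b k i : ℕ} (hb : 2 ≤ b) (hk : k < b ^ i) : mu1 b k ≤ i := by
  unfold mu1
  split_ifs with h
  · omega
  · exact Nat.log_lt_of_lt_pow h hk

theorem dn_isnet (b : ℕ) [NeZero b] (hb : 2 ≤ b) (t m n : ℕ) (htm : t ≤ m) (hmn : m ≤ n)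
    (C1 C2 : Matrix (Fin n) (Fin m) (ZMod b))
    (H : ∀ k1 k2 : ℕ, k1 < b ^ n → k2 < b ^ n →
          Matrix.mulVec C1.transpose (digitVec b n k1) +
            Matrix.mulVec C2.transpose (digitVec b n k2) = 0 →
          ¬(k1 = 0 ∧ k2 = 0) → m - t < mu1 b k1 + mu1 b k2)
    (i j c e : ℕ) (hij : i + j = m - t) (hc : c < b ^ i) (he : e < b ^ j) :
    (Finset.univ.filter (fun a : Fin m → Fin b =>
      ⌊(b : ℝ) ^ i * (digitalNetPoint b m n C1 C2 a).1⌋₊ = c ∧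
        ⌊(b : ℝ) ^ j * (digitalNetPoint b m n C1 C2 a).2⌋₊ = e)).card = b ^ t := by
  have hi : i ≤ n := by omega
  have hj : j ≤ n := by omega
  obtain ⟨w, hw⟩ := dn_coord hb C1 i hi c hc
  obtain ⟨v, hv⟩ := dn_coord hb C2 j hj e he
  let A : Matrix (Fin i ⊕ Fin j) (Fin m) (ZMod b) :=
    Matrix.of (Sum.elim (fun l => C1 (Fin.castLE hi l)) (fun l => C2 (Fin.castLE hj l)))
  have hA : ∀ u, Matrix.mulVec A.transpose u = 0 → u = 0 := by
    intro u hu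
    obtain ⟨k1, hk1, hz1, hm1⟩ := dn_mulVec hb C1 i hi (fun l => u (Sum.inl l))
    obtain ⟨k2, hk2, hz2, hm2⟩ := dn_mulVec hb C2 j hj (fun l => u (Sum.inr l))
    have hsum : Matrix.mulVec C1.transpose (digitVec b n k1) +
            Matrix.mulVec C2.transpose (digitVec b n k2) = 0 := by
      rw [← hu]
      ext1 q
      rw [Pi.add_apply, hm1, hm2, Matrix.mulVec, dotProduct, Fintype.sum_sum_type]
      rfl
    have hzz : k1 = 0 ∧ k2 = 0 := by
      by_contra hne
      have := H k1 k2 (lt_of_lt_of_le hk1 (Nat.pow_le_pow_right (by omega) hi))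
        (lt_of_lt_of_le hk2 (Nat.pow_le_pow_right (by omega) hj)) hsum hne
      have := dn_mu1 hb hk1
      have := dn_mu1 hb hk2
      omega
    ext1 l
    rcases l with l | l
    · exact congrFun (hz1 hzz.1) l
    · exact congrFun (hz2 hzz.2) l
  have hcount := dn_count A hA (Sum.elim w v)
  have hcard : (Finset.univ.filter (fun a : Fin m → Fin b =>
      ⌊(b : ℝ) ^ i * (digitalNetPoint b m n C1 C2 a).1⌋₊ = c ∧
        ⌊(b : ℝ) ^ j * (digitalNetPoint b m n C1 C2 a).2⌋₊ = e)).card =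
      (Finset.univ.filter (fun x : Fin m → ZMod b => Matrix.mulVec A x = Sum.elim w v)).card := by
    refine Finset.card_bij' (fun a _ => fun q => ((a q : ℕ) : ZMod b))
      (fun x _ => fun q => ⟨(x q).val, ZMod.val_lt _⟩) ?_ ?_ ?_ ?_
    · intro a ha
      simp only [Finset.mem_filter, Finset.mem_univ, true_and] at ha ⊢
      have h1 := (hw _).1 ha.1
      have h2 := (hv _).1 ha.2
      ext1 l
      rcases l with l | l
      · exact h1 l
      · exact h2 l
    · intro x hx
      simp only [Finset.mem_filter, Finset.mem_univ, true_and] at hx ⊢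
      have hxx : (fun q => ((((⟨(x q).val, ZMod.val_lt _⟩ : Fin b)) : ℕ) : ZMod b)) = x := by
        ext1 q
        simp
      refine ⟨(hw _).2 ?_, (hv _).2 ?_⟩
      · rw [hxx]
        intro l
        exact congrFun hx (Sum.inl l)
      · rw [hxx]
        intro l
        exact congrFun hx (Sum.inr l)
    · intro a _
      ext q
      simp [ZMod.val_natCast, Nat.mod_eq_of_lt (a q).2]
    · intro x _
      ext1 q
      simp
  rw [hcard]
  have hpos : 0 < b ^ (i + j) := Nat.pow_pos (by omega)
  simp only [Fintype.card_sum, Fintype.card_fin] at hcount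
  have : m = t + (i + j) := by omega
  have hp : b ^ m = b ^ t * b ^ (i + j) := by rw [← pow_add, ← this]
  exact Nat.eq_of_mul_eq_mul_right hpos (hcount.trans hp)

/-- For every integer `b ≥ 2` and every `t ∈ ℕ`, there is a constant
`C > 0` (depending only on `b` and `t`) such that for all `m, n ∈ ℕ` with
`t ≤ m ≤ n` (and `m ≥ 1`) and all `n × m` matrices `C₁, C₂` over `ZMod b` whose dual
net only contains pairs `(k₁, k₂) ≠ (0, 0)` with `μ₁(k₁) + μ₁(k₂) > m - t`, the
two-dimensional digital net `P` generated by `C₁, C₂` satisfies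
`L_∞(P) ≤ C · m / bᵐ`. -/
theorem linf_discrepancy_of_min_nrt_weight (b : ℕ) (hb : 2 ≤ b) (t : ℕ) :
    ∃ C : ℝ, 0 < C ∧ ∀ m n : ℕ, 1 ≤ m → t ≤ m → m ≤ n →
      ∀ C1 C2 : Matrix (Fin n) (Fin m) (ZMod b),
        (∀ k1 k2 : ℕ, k1 < b ^ n → k2 < b ^ n →
          Matrix.mulVec C1.transpose (digitVec b n k1) +
            Matrix.mulVec C2.transpose (digitVec b n k2) = 0 →
          ¬(k1 = 0 ∧ k2 = 0) → m - t < mu1 b k1 + mu1 b k2) →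
        LinfDisc (digitalNetPoint b m n C1 C2) ≤ C * (m : ℝ) / (b : ℝ) ^ m := by
  have hbpos : 0 < b := by omega
  have : NeZero b := ⟨by omega⟩
  have hb0 : (0 : ℝ) < b := by exact_mod_cast hbpos
  refine ⟨(b : ℝ) ^ t * (b + 1), by positivity, ?_⟩
  intro m n hm htm hmn C1 C2 H
  unfold LinfDisc
  have hm1 : (1 : ℝ) ≤ m := by exact_mod_cast hm
  apply Real.iSup_le
  · rintro ⟨⟨y1, y2⟩, hy⟩
    obtain ⟨⟨h10, h11⟩, ⟨h20, h21⟩⟩ := hy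
    have key := dn_net (digitalNetPoint b m n C1 C2)
      (fun a => by unfold digitalNetPoint; positivity) b (m - t) (b ^ t) hb
      (dn_isnet b hb t m n htm hmn C1 C2 H) y1 y2 h10 h11 h20 h21
    have hbm : (0 : ℝ) < (b : ℝ) ^ m := by positivity
    have hpow : ((b ^ t : ℕ) : ℝ) * (b : ℝ) ^ (m - t) = (b : ℝ) ^ m := by
      push_cast
      rw [← pow_add]
      congr 1
      omega
    rw [hpow] at key
    simp only [discAt, Fintype.card_fun, Fintype.card_fin]
    rw [le_div_iff₀ hbm, ← abs_of_pos hbm, ← abs_mul, sub_mul]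
    push_cast at key ⊢
    rw [div_mul_cancel₀ _ hbm.ne', mul_comm (y1 * y2)]
    refine key.trans ?_
    rw [mul_assoc]
    have hdm : ((m - t : ℕ) : ℝ) ≤ m := by exact_mod_cast Nat.sub_le m t
    gcongr
    nlinarith
  · positivity
end

section
/- For every integer b ≥ 2, every real number p with 1 ≤ p < ∞, and every t ∈ ℕ₀, there exists a constant C > 0 (depending only on b, p and t) with the following property: for all m, n ∈ ℕ with m ≥ 1, t ≤ 2m and n ≥ 2m, and all n×m matrices C₁, C₂ over Z_b whose dual net P⊥ satisfies μ₂(k₁) + μ₂(k₂) > 2m − t for every (k₁, k₂) ∈ P⊥ with (k₁, k₂) ≠ (0, 0), the two-dimensional digital net P generated by C₁, C₂ satisfies L_p(P) ≤ C·√m / b^m. -/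
open MeasureTheory
open scoped BigOperators

/-- `L_p` discrepancy of the finite point family `P`, for `1 ≤ p < ∞`. -/
noncomputable def LpDisc (p : ℝ) {ι : Type} [Fintype ι] (P : ι → ℝ × ℝ) : ℝ :=
  (∫ y in (Set.Ico (0:ℝ) 1) ×ˢ (Set.Ico (0:ℝ) 1), |discAt P y| ^ p) ^ (1 / p)

/-- The Dick weight `μ₂(k)`: the sum of the two largest indices `i ≥ 1` such that the
`i`-th base-`b` digit of `k` is nonzero if `k` has at least two nonzero digits, the
largest such index if `k` has exactly one nonzero digit, and `μ₂(0) = 0`. -/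
def mu2 (b k : ℕ) : ℕ :=
  if k = 0 then 0
  else
    let a1 := Nat.log b k + 1
    let r := k % b ^ (a1 - 1)
    if r = 0 then a1 else a1 + (Nat.log b r + 1)




namespace DickNet
open Finset

/-! ### Uniform distribution via characters -/

section uniform
variable {b m n : ℕ} [NeZero b]

lemma surj_of_dual {A : Type} [AddCommGroup A] [Fintype A]
    (φ : A →+ (Fin n → ZMod b) × (Fin n → ZMod b))
    (h : ∀ k1 k2 : Fin n → ZMod b,
      (∀ a, dotProduct k1 (φ a).1 + dotProduct k2 (φ a).2 = 0) → k1 = 0 ∧ k2 = 0) :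
    Function.Surjective φ := by
  intro w
  by_contra hw
  push Not at hw
  let e : AddChar (ZMod b) ℂ := ZMod.stdAddChar
  have einj : Function.Injective e := ZMod.injective_stdAddChar
  let f : A → (Fin n → ZMod b) × (Fin n → ZMod b) → ℂ := fun a k =>
    e (dotProduct k.1 ((φ a).1 - w.1) + dotProduct k.2 ((φ a).2 - w.2))
  have h1 : ∑ a, ∑ k, f a k = 0 := by
    apply Finset.sum_eq_zero
    intro a _
    let χ : AddChar ((Fin n → ZMod b) × (Fin n → ZMod b)) ℂ :=
      { toFun := fun k => f a k
        map_zero_eq_one' := by simp [f]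
        map_add_eq_mul' := by
          intro x y
          simp only [f]
          rw [← AddChar.map_add_eq_mul]
          congr 1
          simp only [Prod.fst_add, Prod.snd_add, add_dotProduct]
          ring }
    have : χ ≠ 1 := by
      intro hχ
      apply hw a
      have key : ∀ k : (Fin n → ZMod b) × (Fin n → ZMod b), dotProduct k.1 ((φ a).1 - w.1) + dotProduct k.2 ((φ a).2 - w.2) = 0 := by
        intro k
        have : χ k = 1 := by rw [hχ]; rfl
        apply einj
        rw [AddChar.map_zero_eq_one]
        exact this
      ext i
      · have := key (Pi.single i 1, 0)
        simp at this
        exact sub_eq_zero.mp this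
      · have := key (0, Pi.single i 1)
        simp at this
        exact sub_eq_zero.mp this
    exact AddChar.sum_eq_zero_of_ne_one this
  rw [Finset.sum_comm] at h1
  have h2 : ∀ k : (Fin n → ZMod b) × (Fin n → ZMod b), k ≠ 0 → ∑ a, f a k = 0 := by
    intro k hk
    let χ : AddChar A ℂ :=
      { toFun := fun a => e (dotProduct k.1 (φ a).1 + dotProduct k.2 (φ a).2)
        map_zero_eq_one' := by simp
        map_add_eq_mul' := by
          intro x y
          rw [← AddChar.map_add_eq_mul]
          congr 1
          simp only [map_add, Prod.fst_add, Prod.snd_add, dotProduct_add]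
          ring }
    have hχ : χ ≠ 1 := by
      intro hχ
      apply hk
      have := h k.1 k.2 (by
        intro a
        have : χ a = 1 := by rw [hχ]; rfl
        apply einj
        rw [AddChar.map_zero_eq_one]
        exact this)
      exact Prod.ext this.1 this.2
    have h3 : ∀ a, f a k = χ a * e (-(dotProduct k.1 w.1 + dotProduct k.2 w.2)) := by
      intro a
      change _ = e _ * _
      rw [← AddChar.map_add_eq_mul]
      simp only [f, dotProduct_sub]
      congr 1
      ring
    simp_rw [h3]
    rw [← Finset.sum_mul, AddChar.sum_eq_zero_of_ne_one hχ, zero_mul]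
  rw [Finset.sum_eq_single 0 (fun k _ hk => h2 k hk) (by simp)] at h1
  simp [f] at h1

lemma sum_comp_surj {A B : Type} [AddCommGroup A] [Fintype A] [AddCommGroup B] [Fintype B]
    (φ : A →+ B) (hφ : Function.Surjective φ) (F : B → ℝ) :
    (Fintype.card B : ℝ) * ∑ a, F (φ a) = (Fintype.card A : ℝ) * ∑ x, F x := by
  classical
  -- sum over all translations
  have h1 : ∀ a0 : A, ∑ a, F (φ a) = ∑ a, F (φ a + φ a0) := by
    intro a0
    rw [← Equiv.sum_comp (Equiv.addRight a0)]
    simp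
  have h2 : ∀ x : B, ∑ a, F (φ a) = ∑ a, F (φ a + x) := by
    intro x
    obtain ⟨a0, rfl⟩ := hφ x
    exact h1 a0
  have h3 : ∑ x : B, ∑ a, F (φ a) = ∑ x : B, ∑ a, F (φ a + x) :=
    Finset.sum_congr rfl fun x _ => h2 x
  have h4 : ∀ a, ∑ x : B, F (φ a + x) = ∑ x, F x := by
    intro a
    exact Equiv.sum_comp (Equiv.addLeft (φ a)) F
  have h5 : ∑ x : B, ∑ a, F (φ a + x) = ∑ a, ∑ x : B, F (φ a + x) := Finset.sum_comm
  rw [h5] at h3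
  simp only [h4, Finset.sum_const, Finset.card_univ, nsmul_eq_mul] at h3
  exact h3

/-- average over the net -/
noncomputable def EP (C1 C2 : Matrix (Fin n) (Fin m) (ZMod b))
    (F : (Fin n → ZMod b) → (Fin n → ZMod b) → ℝ) : ℝ :=
  (∑ a : Fin m → ZMod b, F (C1.mulVec a) (C2.mulVec a)) / (b : ℝ) ^ m

/-- average over the grid -/
noncomputable def EG (F : (Fin n → ZMod b) → (Fin n → ZMod b) → ℝ) : ℝ :=
  (∑ v : Fin n → ZMod b, ∑ w : Fin n → ZMod b, F v w) / ((b : ℝ) ^ n * (b : ℝ) ^ n)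

lemma EP_eq_EG (C1 C2 : Matrix (Fin n) (Fin m) (ZMod b)) (p1 p2 : Fin n → Prop)
    (hdual : ∀ k1 k2 : Fin n → ZMod b, (∀ i, ¬ p1 i → k1 i = 0) → (∀ i, ¬ p2 i → k2 i = 0) →
      C1.transpose.mulVec k1 + C2.transpose.mulVec k2 = 0 → k1 = 0 ∧ k2 = 0)
    (F : (Fin n → ZMod b) → (Fin n → ZMod b) → ℝ)
    (hF : ∀ v v' w w', (∀ i, p1 i → v i = v' i) → (∀ i, p2 i → w i = w' i) → F v w = F v' w') :
    EP C1 C2 F = EG F := by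
  classical
  let φ : (Fin m → ZMod b) × ((Fin n → ZMod b) × (Fin n → ZMod b)) →+
      (Fin n → ZMod b) × (Fin n → ZMod b) :=
    { toFun := fun x => (C1.mulVec x.1 + fun i => if p1 i then 0 else x.2.1 i,
        C2.mulVec x.1 + fun i => if p2 i then 0 else x.2.2 i)
      map_zero' := by ext i <;> simp
      map_add' := by
        intro x y
        ext i
        · simp only [Prod.fst_add, Prod.snd_add, Matrix.mulVec_add, Pi.add_apply]
          split_ifs <;> ring
        · simp only [Prod.fst_add, Prod.snd_add, Matrix.mulVec_add, Pi.add_apply]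
          split_ifs <;> ring }
  have hs : Function.Surjective φ := by
    apply surj_of_dual
    intro k1 k2 hk
    apply hdual
    · intro i hi
      have := hk (0, (Pi.single i 1, 0))
      simp only [φ, AddMonoidHom.coe_mk, ZeroHom.coe_mk, Matrix.mulVec_zero, zero_add,
        dotProduct] at this
      rw [Finset.sum_eq_single i] at this
      · simpa [hi] using this
      · intro j _ hj
        simp [hj]
      · simp
    · intro i hi
      have := hk (0, (0, Pi.single i 1))
      simp only [φ, AddMonoidHom.coe_mk, ZeroHom.coe_mk, Matrix.mulVec_zero, zero_add,
        dotProduct] at this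
      rw [add_comm, Finset.sum_eq_single i] at this
      · simpa [hi] using this
      · intro j _ hj
        simp [hj]
      · simp
    · ext j
      have := hk (Pi.single j 1, 0)
      simp only [φ, AddMonoidHom.coe_mk, ZeroHom.coe_mk] at this
      simp only [dotProduct, Matrix.mulVec_single_one, Pi.add_apply, Matrix.col_apply] at this
      simp only [Prod.fst_zero, Prod.snd_zero, Pi.zero_apply, ite_self, add_zero] at this
      simp only [Pi.add_apply, Matrix.mulVec, dotProduct, Matrix.transpose_apply, Pi.zero_apply]
      rw [← this]
      congr 1 <;> exact Finset.sum_congr rfl fun _ _ => mul_comm _ _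
  have h := sum_comp_surj φ hs (fun x => F x.1 x.2)
  have h2 : ∀ x, F (φ x).1 (φ x).2 = F (C1.mulVec x.1) (C2.mulVec x.1) := by
    intro x
    apply hF
    · intro i hi
      simp [φ, hi]
    · intro i hi
      simp [φ, hi]
  simp only [h2] at h
  rw [Fintype.sum_prod_type] at h
  simp only [Finset.sum_const, Finset.card_univ, nsmul_eq_mul, Fintype.card_prod, Fintype.card_fun,
    ZMod.card, Fintype.card_fin] at h
  rw [← Finset.mul_sum, Fintype.sum_prod_type] at h
  have hb : (b : ℝ) ≠ 0 := by exact_mod_cast NeZero.ne b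
  unfold EP EG
  rw [div_eq_div_iff (by positivity) (by positivity)]
  push_cast at h
  have hb2 : (b : ℝ) ^ n * (b : ℝ) ^ n ≠ 0 := by positivity
  apply mul_left_cancel₀ hb2
  linarith

end uniform

section digits
set_option linter.unusedSectionVars false
variable {b m n : ℕ} [NeZero b]

/-- digits, zero-indexed, zero beyond `n` -/
def dg (v : Fin n → ZMod b) (i : ℕ) : ℕ := if h : i < n then (v ⟨i, h⟩).val else 0

lemma dg_lt (v : Fin n → ZMod b) (i : ℕ) : dg v i < b := by
  unfold dg
  split_ifs
  · exact ZMod.val_lt _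
  · exact Nat.pos_of_ne_zero (NeZero.ne b)

/-- the number given by the first `j` digits -/
def X (v : Fin n → ZMod b) : ℕ → ℕ
  | 0 => 0
  | j + 1 => b * X v j + dg v j

/-- the tail after `j` digits -/
noncomputable def T (v : Fin n → ZMod b) (j : ℕ) : ℝ :=
  ∑ i ∈ range (n - j), (dg v (j + i) : ℝ) / (b : ℝ) ^ (i + 1)

lemma bpos : (0 : ℝ) < b := by
  exact_mod_cast Nat.pos_of_ne_zero (NeZero.ne b)

lemma T_step (v : Fin n → ZMod b) (j : ℕ) (hj : j < n) : (b : ℝ) * T v j = dg v j + T v (j + 1) := by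
  have hb : (b : ℝ) ≠ 0 := bpos.ne'
  unfold T
  have : n - j = (n - (j + 1)) + 1 := by omega
  rw [this, sum_range_succ', mul_add, mul_sum, add_comm]
  congr 1
  · field_simp
    simp
  · apply sum_congr rfl
    intro i _
    rw [show j + (i + 1) = j + 1 + i by ring]
    field_simp
    ring

lemma T_nonneg (v : Fin n → ZMod b) (j : ℕ) : 0 ≤ T v j :=
  sum_nonneg fun i _ => by have := bpos (b := b); positivity

lemma T_le_one (v : Fin n → ZMod b) (j : ℕ) : T v j ≤ 1 := by
  have hb := bpos (b := b)
  have : ∀ k j, n - j = k → T v j ≤ 1 := by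
    intro k
    induction k with
    | zero => intro j hj; simp [T, hj]
    | succ k ih =>
      intro j hj
      have h1 := T_step v j (by omega)
      have h2 := ih (j + 1) (by omega)
      have h3 : (dg v j : ℝ) + 1 ≤ b := by exact_mod_cast dg_lt v j
      have : (b : ℝ) * T v j ≤ b * 1 := by linarith
      exact le_of_mul_le_mul_left this hb
  exact this _ j rfl

lemma X_div (v : Fin n → ZMod b) (j i : ℕ) : X v (j + i) / b ^ i = X v j := by
  have hb : 0 < b := Nat.pos_of_ne_zero (NeZero.ne b)
  induction i with
  | zero => simp
  | succ i ih =>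
    rw [← ih, ← add_assoc, X, pow_succ', ← Nat.div_div_eq_div_mul]
    congr 1
    rw [Nat.mul_add_div hb, Nat.div_eq_of_lt (dg_lt v _), add_zero]

lemma X_div' (v : Fin n → ZMod b) (j k : ℕ) (h : j ≤ k) : X v k / b ^ (k - j) = X v j := by
  have := X_div v j (k - j)
  rwa [Nat.add_sub_cancel' h] at this

lemma X_lt (v : Fin n → ZMod b) (j : ℕ) : X v j < b ^ j := by
  induction j with
  | zero => simp [X]
  | succ j ih =>
    rw [X, pow_succ']
    have := dg_lt v j
    calc b * X v j + dg v j < b * X v j + b := by omega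
      _ = b * (X v j + 1) := by ring
      _ ≤ _ := Nat.mul_le_mul_left _ ih

lemma X_inj : Function.Injective (fun v : Fin n → ZMod b => X v n) := by
  intro v w h
  simp only at h
  have h1 : ∀ j ≤ n, X v j = X w j := by
    intro j hj
    rw [← X_div' v j n hj, ← X_div' w j n hj, h]
  ext i
  have h2 : dg v i = dg w i := by
    have h3 := h1 (i + 1) i.2
    have h4 := h1 i i.2.le
    simp only [X] at h3
    rw [h4] at h3
    omega
  unfold dg at h2
  simp only [i.2, dif_pos] at h2
  exact ZMod.val_injective _ h2

lemma X_congr (v w : Fin n → ZMod b) (j : ℕ) (h : ∀ i : Fin n, (i : ℕ) < j → v i = w i) :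
    X v j = X w j := by
  induction j with
  | zero => rfl
  | succ j ih =>
    simp only [X]
    rw [ih (fun i hi => h i (by omega))]
    congr 1
    unfold dg
    split_ifs with hj
    · rw [h ⟨j, hj⟩ (by simp)]
    · rfl

lemma dg_congr (v w : Fin n → ZMod b) (j : ℕ) (h : ∀ i : Fin n, (i : ℕ) = j → v i = w i) :
    dg v j = dg w j := by
  unfold dg
  split_ifs with hj
  · rw [h ⟨j, hj⟩ (by simp)]
  · rfl

lemma X_real (v : Fin n → ZMod b) : 
    (∑ i : Fin n, ((v i).val : ℝ) / (b : ℝ) ^ ((i : ℕ) + 1)) * (b : ℝ) ^ n = X v n := by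
  have hb := bpos (b := b)
  have h0 : ∑ i : Fin n, ((v i).val : ℝ) / (b : ℝ) ^ ((i : ℕ) + 1) = T v 0 := by
    unfold T
    rw [← Fin.sum_univ_eq_sum_range (fun i => (dg v (0 + i) : ℝ) / (b : ℝ) ^ (i + 1))]
    apply Finset.sum_congr rfl
    intro i _
    simp [dg]
  rw [h0]
  have h1 : ∀ j ≤ n, T v 0 * (b : ℝ) ^ j = X v j + T v j := by
    intro j
    induction j with
    | zero => simp [X]
    | succ j ih =>
      intro hj
      have h2 := ih (by omega)
      have h3 := T_step v j (by omega)
      rw [pow_succ, ← mul_assoc, h2, X]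
      push_cast
      linarith
  rw [h1 n le_rfl]
  simp [T]

lemma image_X : (Finset.univ : Finset (Fin n → ZMod b)).image (fun v => X v n) = range (b ^ n) := by
  apply Finset.eq_of_subset_of_card_le
  · intro x hx
    simp only [mem_image, mem_univ, true_and] at hx
    obtain ⟨v, rfl⟩ := hx
    exact mem_range.mpr (X_lt v n)
  · rw [card_image_of_injective _ X_inj]
    simp [ZMod.card]

lemma sum_X (f : ℕ → ℝ) : ∑ v : Fin n → ZMod b, f (X v n) = ∑ x ∈ range (b ^ n), f x := by
  rw [← image_X (b := b) (n := n), sum_image]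
  intro v _ w _ h
  exact X_inj h

/-! Dual numbers -/

/-- number with little-endian digits -/
def num (k : Fin n → ZMod b) : ℕ := ∑ i : Fin n, (k i).val * b ^ (i : ℕ)

lemma sum_digit_lt (e : ℕ → ℕ) (he : ∀ i, e i < b) (q : ℕ) :
    ∑ i ∈ range q, e i * b ^ i < b ^ q := by
  induction q with
  | zero => simp
  | succ q ih =>
    rw [sum_range_succ, pow_succ]
    have := he q
    calc _ < b ^ q + e q * b ^ q := by omega
      _ = b ^ q * (e q + 1) := by ring
      _ ≤ _ := Nat.mul_le_mul_left _ this

lemma digit_sum (e : ℕ → ℕ) (he : ∀ i, e i < b) (r q : ℕ) (h : q < r) :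
    (∑ i ∈ range r, e i * b ^ i) / b ^ q % b = e q := by
  have hb : 0 < b := Nat.pos_of_ne_zero (NeZero.ne b)
  obtain ⟨s, rfl⟩ : ∃ s, r = q + 1 + s := ⟨r - (q + 1), by omega⟩
  rw [sum_range_add, sum_range_succ]
  have h1 : ∑ x ∈ range s, e (q + 1 + x) * b ^ (q + 1 + x)
      = b ^ q * (b * ∑ x ∈ range s, e (q + 1 + x) * b ^ x) := by
    rw [mul_sum, mul_sum]
    apply sum_congr rfl
    intro x _
    ring
  rw [h1, show ∀ A B C : ℕ, A + e q * b ^ q + b ^ q * (b * C) = A + b ^ q * (e q + b * C) by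
    intros; ring]
  rw [Nat.add_mul_div_left _ _ (by positivity), Nat.div_eq_of_lt (sum_digit_lt e he q)]
  simp [Nat.mod_eq_of_lt (he q)]
  exact 0

lemma num_eq (k : Fin n → ZMod b) : num k = ∑ i ∈ range n, dg k i * b ^ i := by
  unfold num
  rw [← Fin.sum_univ_eq_sum_range (fun i => dg k i * b ^ i)]
  simp [dg]

lemma num_lt (k : Fin n → ZMod b) : num k < b ^ n := by
  rw [num_eq]
  exact sum_digit_lt _ (dg_lt k) n

lemma num_digit (k : Fin n → ZMod b) (q : ℕ) (hq : q < n) : num k / b ^ q % b = dg k q := by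
  rw [num_eq]
  exact digit_sum _ (dg_lt k) n q hq

lemma digitVec_num (k : Fin n → ZMod b) : digitVec b n (num k) = k := by
  ext i
  simp only [digitVec]
  rw [num_digit k i i.2]
  simp [dg]

lemma num_zero (k : Fin n → ZMod b) (h : num k = 0) : k = 0 := by
  rw [← digitVec_num k, h]
  ext i
  simp [digitVec]

lemma mu2_le (hb : 2 ≤ b) (K j i : ℕ)
    (h : ∀ q, K / b ^ q % b ≠ 0 → q < j ∨ q + 1 = j + i) : mu2 b K ≤ 2 * j + i := by
  have top : ∀ K, K ≠ 0 → K / b ^ Nat.log b K % b ≠ 0 := by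
    intro K hK
    have h1 := Nat.pow_log_le_self b hK
    have h2 := Nat.lt_pow_succ_log_self (by omega : 1 < b) K
    have h3 : K / b ^ Nat.log b K < b := by
      rw [Nat.div_lt_iff_lt_mul (by positivity)]
      rwa [pow_succ'] at h2
    rw [Nat.mod_eq_of_lt h3]
    have := Nat.div_pos h1 (by positivity)
    omega
  unfold mu2
  split_ifs with hK
  · omega
  · simp only [Nat.add_sub_cancel]
    have h1 := h _ (top K hK)
    split_ifs with hr
    · omega
    · set q1 := Nat.log b K with hq1
      set r := K % b ^ q1 with hr'
      have h2 := top r hr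
      have h3 : Nat.log b r < q1 := by
        apply Nat.log_lt_of_lt_pow hr
        exact Nat.mod_lt _ (by positivity)
      have h4 : r / b ^ Nat.log b r % b = K / b ^ Nat.log b r % b := by
        generalize Nat.log b r = s at h3 ⊢
        rw [hr']
        obtain ⟨u, hu⟩ : ∃ u, q1 = s + (1 + u) := ⟨q1 - s - 1, by omega⟩
        rw [hu, pow_add, Nat.mod_mul_right_div_self, pow_add, pow_one, Nat.mod_mul_right_mod]
      rw [h4] at h2
      have h5 := h _ h2
      omega

lemma dual_zero (hb : 2 ≤ b) (t : ℕ) (C1 C2 : Matrix (Fin n) (Fin m) (ZMod b))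
    (hC : ∀ k1 k2 : ℕ, k1 < b ^ n → k2 < b ^ n →
          Matrix.mulVec C1.transpose (digitVec b n k1) +
            Matrix.mulVec C2.transpose (digitVec b n k2) = 0 →
          ¬(k1 = 0 ∧ k2 = 0) → 2 * m - t < mu2 b k1 + mu2 b k2)
    (j i l : ℕ) (hw : 2 * j + i + 2 * l ≤ 2 * m - t) (k1 k2 : Fin n → ZMod b)
    (h1 : ∀ q : Fin n, ¬ ((q : ℕ) < j ∨ (q : ℕ) + 1 = j + i) → k1 q = 0)
    (h2 : ∀ q : Fin n, ¬ ((q : ℕ) < l) → k2 q = 0)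
    (h : C1.transpose.mulVec k1 + C2.transpose.mulVec k2 = 0) : k1 = 0 ∧ k2 = 0 := by
  have hbpos : 0 < b := by omega
  by_contra hne
  have h3 := hC (num k1) (num k2) (num_lt k1) (num_lt k2)
    (by rw [digitVec_num, digitVec_num]; exact h)
    (fun h0 => hne ⟨num_zero _ h0.1, num_zero _ h0.2⟩)
  have gen : ∀ (k : Fin n → ZMod b) (q : ℕ), num k / b ^ q % b ≠ 0 → ∃ hq : q < n, k ⟨q, hq⟩ ≠ 0 := by
    intro k q hq
    by_cases hqn : q < n
    · rw [num_digit k q hqn] at hq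
      refine ⟨hqn, fun h0 => hq ?_⟩
      simp [dg, hqn, h0]
    · exfalso
      apply hq
      rw [Nat.div_eq_of_lt ((num_lt k).trans_le (Nat.pow_le_pow_right hbpos (by omega)))]
      simp
  have h4 := mu2_le hb (num k1) j i (by
    intro q hq
    obtain ⟨hqn, hq'⟩ := gen k1 q hq
    by_contra hcon
    exact hq' (h1 ⟨q, hqn⟩ hcon))
  have h5 := mu2_le hb (num k2) l 0 (by
    intro q hq
    obtain ⟨hqn, hq'⟩ := gen k2 q hq
    by_contra hcon
    exact hq' (h2 ⟨q, hqn⟩ (by push Not at hcon; simp; omega)))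
  omega

end digits

section bounds
set_option linter.unusedSectionVars false
variable {b m n : ℕ} [NeZero b]

/-- difference of the averages -/
noncomputable def U (C1 C2 : Matrix (Fin n) (Fin m) (ZMod b))
    (F : (Fin n → ZMod b) → (Fin n → ZMod b) → ℝ) : ℝ := EP C1 C2 F - EG F

lemma EP_sum {ι : Type} (C1 C2 : Matrix (Fin n) (Fin m) (ZMod b)) (s : Finset ι)
    (F : ι → (Fin n → ZMod b) → (Fin n → ZMod b) → ℝ) :
    EP C1 C2 (fun v w => ∑ i ∈ s, F i v w) = ∑ i ∈ s, EP C1 C2 (F i) := by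
  unfold EP
  rw [← Finset.sum_div, Finset.sum_comm]

lemma EG_sum {ι : Type} (s : Finset ι)
    (F : ι → (Fin n → ZMod b) → (Fin n → ZMod b) → ℝ) :
    EG (fun v w => ∑ i ∈ s, F i v w) = ∑ i ∈ s, EG (F i) := by
  unfold EG
  rw [← Finset.sum_div]
  congr 1
  rw [Finset.sum_comm (s := s)]
  exact Finset.sum_congr rfl fun v _ => Finset.sum_comm

lemma U_sum {ι : Type} (C1 C2 : Matrix (Fin n) (Fin m) (ZMod b)) (s : Finset ι)
    (F : ι → (Fin n → ZMod b) → (Fin n → ZMod b) → ℝ) :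
    U C1 C2 (fun v w => ∑ i ∈ s, F i v w) = ∑ i ∈ s, U C1 C2 (F i) := by
  unfold U
  rw [EP_sum, EG_sum, Finset.sum_sub_distrib]

lemma U_add (C1 C2 : Matrix (Fin n) (Fin m) (ZMod b))
    (F G : (Fin n → ZMod b) → (Fin n → ZMod b) → ℝ) :
    U C1 C2 (fun v w => F v w + G v w) = U C1 C2 F + U C1 C2 G := by
  unfold U EP EG
  simp only [Finset.sum_add_distrib]
  ring

lemma EP_mono (C1 C2 : Matrix (Fin n) (Fin m) (ZMod b))
    (F G : (Fin n → ZMod b) → (Fin n → ZMod b) → ℝ) (h : ∀ v w, F v w ≤ G v w) :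
    EP C1 C2 F ≤ EP C1 C2 G := by
  unfold EP
  gcongr
  exact h _ _

lemma U_abs_le (C1 C2 : Matrix (Fin n) (Fin m) (ZMod b))
    (F B : (Fin n → ZMod b) → (Fin n → ZMod b) → ℝ) (c : ℝ) (h : ∀ v w, |F v w| ≤ c * B v w) :
    |U C1 C2 F| ≤ c * (EP C1 C2 B + EG B) := by
  have h1 : |EP C1 C2 F| ≤ c * EP C1 C2 B := by
    unfold EP
    rw [abs_div, abs_of_nonneg (by positivity : (0:ℝ) ≤ (b:ℝ) ^ m), ← mul_div_assoc, mul_sum]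
    gcongr
    refine (Finset.abs_sum_le_sum_abs _ _).trans ?_
    exact Finset.sum_le_sum fun a _ => h _ _
  have h2 : |EG F| ≤ c * EG B := by
    unfold EG
    rw [abs_div, abs_of_nonneg (by positivity : (0:ℝ) ≤ (b:ℝ) ^ n * (b : ℝ) ^ n),
      ← mul_div_assoc, mul_sum]
    gcongr
    refine (Finset.abs_sum_le_sum_abs _ _).trans ?_
    refine Finset.sum_le_sum fun v _ => ?_
    rw [mul_sum]
    refine (Finset.abs_sum_le_sum_abs _ _).trans ?_
    exact Finset.sum_le_sum fun a _ => h _ _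
  unfold U
  calc _ ≤ |EP C1 C2 F| + |EG F| := abs_sub _ _
    _ ≤ _ := by linarith

/-- box indicator -/
def Bx (c d Y Z : ℕ) (v w : Fin n → ZMod b) : ℝ :=
  (if X v c = Y then 1 else 0) * (if X w d = Z then 1 else 0)

lemma count_prefix (c Y : ℕ) (hc : c ≤ n) :
    ∑ v : Fin n → ZMod b, (if X v c = Y then (1 : ℝ) else 0) ≤ (b : ℝ) ^ n / (b : ℝ) ^ c := by
  have hb := bpos (b := b)
  have hb' : 0 < b := Nat.pos_of_ne_zero (NeZero.ne b)
  have h1 : ∀ v : Fin n → ZMod b, (if X v c = Y then (1 : ℝ) else 0)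
      = (fun x => if x / b ^ (n - c) = Y then (1 : ℝ) else 0) (X v n) := by
    intro v
    simp only [X_div' v c n hc]
  rw [Finset.sum_congr rfl fun v _ => h1 v,
    sum_X (fun x => if x / b ^ (n - c) = Y then (1 : ℝ) else 0), Finset.sum_boole]
  have h2 : (range (b ^ n)).filter (fun x => x / b ^ (n - c) = Y)
      ⊆ Finset.Ico (Y * b ^ (n - c)) (Y * b ^ (n - c) + b ^ (n - c)) := by
    intro x hx
    simp only [mem_filter, mem_range] at hx
    have hp : 0 < b ^ (n - c) := by positivity
    rw [Finset.mem_Ico]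
    have h3 := Nat.div_add_mod x (b ^ (n - c))
    have h4 := Nat.mod_lt x hp
    rw [hx.2, mul_comm] at h3
    constructor
    · exact h3 ▸ Nat.le_add_right _ _
    · rw [← h3]; exact Nat.add_lt_add_left (h3.symm ▸ h4) _
  have h3 := Finset.card_le_card h2
  rw [Nat.card_Ico, Nat.add_sub_cancel_left] at h3
  have : (b : ℝ) ^ n / (b : ℝ) ^ c = ((b ^ (n - c) : ℕ) : ℝ) := by
    push_cast
    rw [pow_sub₀ _ hb.ne' hc]
    rfl
  rw [this]
  exact_mod_cast h3

lemma EG_box (c d Y Z : ℕ) (hc : c ≤ n) (hd : d ≤ n) :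
    EG (Bx (b := b) (n := n) c d Y Z) ≤ 1 / (b : ℝ) ^ (c + d) := by
  have hb := bpos (b := b)
  unfold EG Bx
  simp_rw [← Finset.mul_sum]
  rw [← Finset.sum_mul]
  have h1 := count_prefix (b := b) (n := n) c Y hc
  have h2 := count_prefix (b := b) (n := n) d Z hd
  have h3 : (0 : ℝ) ≤ ∑ v : Fin n → ZMod b, (if X v d = Z then (1 : ℝ) else 0) :=
    Finset.sum_nonneg fun v _ => by split_ifs <;> norm_num
  have h4 := mul_le_mul h1 h2 h3 (by positivity)
  rw [div_le_div_iff₀ (by positivity) (by positivity)]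
  calc _ ≤ ((b : ℝ) ^ n / (b : ℝ) ^ c * ((b : ℝ) ^ n / (b : ℝ) ^ d)) * (b : ℝ) ^ (c + d) := by
        gcongr
    _ = _ := by
      rw [pow_add]
      field_simp

/-- The uniformity property of the net. -/
def Uni (t : ℕ) (C1 C2 : Matrix (Fin n) (Fin m) (ZMod b)) : Prop :=
  ∀ j i l : ℕ, 2 * j + i + 2 * l ≤ 2 * m - t →
    ∀ F : (Fin n → ZMod b) → (Fin n → ZMod b) → ℝ,
    (∀ v v' w w', (∀ q : Fin n, ((q : ℕ) < j ∨ (q : ℕ) + 1 = j + i) → v q = v' q) →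
      (∀ q : Fin n, (q : ℕ) < l → w q = w' q) → F v w = F v' w') → EP C1 C2 F = EG F

lemma ite_mono {P Q : Prop} [Decidable P] [Decidable Q] (h : P → Q) :
    (if P then (1 : ℝ) else 0) ≤ if Q then 1 else 0 := by
  split_ifs <;> simp_all

lemma box_bound (hb2 : 2 ≤ b) (t : ℕ) (ht : t ≤ 2 * m) (hn : 2 * m ≤ n)
    (C1 C2 : Matrix (Fin n) (Fin m) (ZMod b))
    (hU : Uni t C1 C2) (c d Y Z : ℕ) (hcd : c + d ≤ m) :
    EP C1 C2 (Bx c d Y Z) + EG (Bx (b := b) (n := n) c d Y Z)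
      ≤ 2 * (b : ℝ) ^ t / (b : ℝ) ^ (c + d) := by
  have hb := bpos (b := b)
  have hb1 : (1 : ℝ) ≤ b := by exact_mod_cast (by omega : 1 ≤ b)
  have h1 := EG_box (b := b) (n := n) c d Y Z (by omega) (by omega)
  have h2 : 1 / (b : ℝ) ^ (c + d) ≤ (b : ℝ) ^ t / (b : ℝ) ^ (c + d) := by
    gcongr
    exact one_le_pow₀ hb1
  have key : ∀ c' d', c' ≤ c → d' ≤ d → 2 * (c' + d') ≤ 2 * m - t → c + d ≤ c' + d' + t →
      EP C1 C2 (Bx c d Y Z) ≤ (b : ℝ) ^ t / (b : ℝ) ^ (c + d) := by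
    intro c' d' hc hd h3 h4
    calc _ ≤ EP C1 C2 (Bx c' d' (Y / b ^ (c - c')) (Z / b ^ (d - d'))) := by
          apply EP_mono
          intro v w
          unfold Bx
          apply mul_le_mul
          · apply ite_mono
            rintro rfl
            exact (X_div' v c' c hc).symm
          · apply ite_mono
            rintro rfl
            exact (X_div' w d' d hd).symm
          · split_ifs <;> norm_num
          · split_ifs <;> norm_num
      _ = EG (Bx (b := b) (n := n) c' d' (Y / b ^ (c - c')) (Z / b ^ (d - d'))) := by
          apply hU c' 0 d' (by omega)
          intro v v' w w' hv hw
          unfold Bx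
          rw [X_congr v v' c' (fun i hi => hv i (Or.inl hi)), X_congr w w' d' (fun i hi => hw i hi)]
      _ ≤ 1 / (b : ℝ) ^ (c' + d') := EG_box _ _ _ _ (by omega) (by omega)
      _ ≤ _ := by
          rw [div_le_div_iff₀ (by positivity) (by positivity), one_mul, ← pow_add]
          exact pow_le_pow_right₀ hb1 (by omega)
  have h5 : EP C1 C2 (Bx c d Y Z) ≤ (b : ℝ) ^ t / (b : ℝ) ^ (c + d) := by
    by_cases hs : 2 * (c + d) ≤ 2 * m - t
    · exact key c d le_rfl le_rfl hs (by omega)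
    · by_cases hc : 2 * c ≤ 2 * m - t
      · exact key c ((2 * m - t) / 2 - c) le_rfl (by omega) (by omega) (by omega)
      · exact key ((2 * m - t) / 2) 0 (by omega) (by omega) (by omega) (by omega)
  have : 2 * (b : ℝ) ^ t / (b : ℝ) ^ (c + d)
    = (b : ℝ) ^ t / (b : ℝ) ^ (c + d) + (b : ℝ) ^ t / (b : ℝ) ^ (c + d) := by ring
  rw [this]
  exact add_le_add h5 (h1.trans h2)

lemma geo (hb2 : 2 ≤ b) (N : ℕ) : ∑ i ∈ range N, 1 / (b : ℝ) ^ i ≤ 2 := by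
  have h2 : (2 : ℝ) ≤ b := by exact_mod_cast hb2
  have hr : (b : ℝ)⁻¹ ≤ 1 / 2 := by
    rw [inv_le_comm₀ (by linarith) (by norm_num)]; linarith
  have h0 : 0 ≤ (b : ℝ)⁻¹ := by positivity
  have h := mul_neg_geom_sum (b : ℝ)⁻¹ N
  have h3 : ∑ i ∈ range N, 1 / (b : ℝ) ^ i = ∑ i ∈ range N, (b : ℝ)⁻¹ ^ i := by
    simp [inv_pow]
  rw [h3]
  have h4 : 0 ≤ (b : ℝ)⁻¹ ^ N := by positivity
  have h5 : 0 ≤ ∑ i ∈ range N, (b : ℝ)⁻¹ ^ i := sum_nonneg fun i _ => by positivity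
  nlinarith

lemma geo_tail (hb2 : 2 ≤ b) (N a : ℕ) :
    ∑ i ∈ range N, (if a ≤ i then 1 / (b : ℝ) ^ i else 0) ≤ 2 / (b : ℝ) ^ a := by
  have hb := bpos (b := b)
  by_cases h : N ≤ a
  · rw [sum_eq_zero]
    · positivity
    · intro i hi
      rw [mem_range] at hi
      rw [if_neg (by omega)]
  · obtain ⟨s, rfl⟩ : ∃ s, N = a + s := ⟨N - a, by omega⟩
    rw [sum_range_add, sum_eq_zero, zero_add]
    · have h1 : ∀ i ∈ range s, (if a ≤ a + i then 1 / (b : ℝ) ^ (a + i) else 0)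
          = 1 / (b : ℝ) ^ a * (1 / (b : ℝ) ^ i) := by
        intro i _
        rw [if_pos (by omega), pow_add]
        field_simp
      rw [sum_congr rfl h1, ← mul_sum]
      have := geo hb2 s
      calc _ ≤ 1 / (b : ℝ) ^ a * 2 := by gcongr
        _ = _ := by ring
    · intro i hi
      rw [mem_range] at hi
      rw [if_neg (by omega)]

lemma geo_rev (hb2 : 2 ≤ b) (N : ℕ) : ∑ l ∈ range N, 1 / (b : ℝ) ^ (N - l) ≤ 2 := by
  refine le_trans ?_ (geo hb2 (N + 1))
  rw [← sum_range_reflect (fun i => 1 / (b : ℝ) ^ i), sum_range_succ]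
  have : ∀ l ∈ range N, 1 / (b : ℝ) ^ (N - l) = 1 / (b : ℝ) ^ (N + 1 - 1 - l) := by
    intro l _; simp
  rw [sum_congr rfl this]
  have hb := bpos (b := b)
  have : (0 : ℝ) ≤ 1 / (b : ℝ) ^ (N + 1 - 1 - N) := by positivity
  linarith

lemma div_lt_of_ne {p s a : ℕ} (h : p / a ≠ s / a) : (p < s ↔ p / a < s / a) := by
  constructor
  · intro hp
    exact lt_of_le_of_ne (Nat.div_le_div_right hp.le) h
  · intro hp
    by_contra hc
    exact absurd (Nat.div_le_div_right (c := a) (not_lt.mp hc)) (by omega)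

lemma ind_diff (P Q R : Prop) [Decidable P] [Decidable Q] [Decidable R] (h : ¬ R → (P ↔ Q)) :
    |(if P then (1 : ℝ) else 0) - (if Q then 1 else 0)| ≤ if R then 1 else 0 := by
  by_cases hR : R
  · rw [if_pos hR]
    split_ifs <;> norm_num
  · have := h hR
    simp [this, hR]

lemma main_bound (hb2 : 2 ≤ b) (t : ℕ) (ht : t ≤ 2 * m) (hn : 2 * m ≤ n)
    (C1 C2 : Matrix (Fin n) (Fin m) (ZMod b)) (hU : Uni t C1 C2) (j Y Z : ℕ) (hj : j ≤ m) (hZ : Z < b ^ n)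
    (g : ℕ → (Fin n → ZMod b) → ℝ)
    (hg : ∀ i v v', (∀ q : Fin n, ((q : ℕ) < j ∨ (q : ℕ) + 1 = j + i) → v q = v' q) →
      g i v = g i v')
    (hgb : ∀ i v, |g i v| ≤ b / (b : ℝ) ^ i * (if X v (j - 1) = Y then 1 else 0)) (N : ℕ) :
    |U C1 C2 (fun v w => (∑ i ∈ range N, g i v) * (if X w n ≤ Z then 1 else 0))|
      ≤ 12 * (b : ℝ) ^ (2 * t + 3) / (b : ℝ) ^ m := by
  have hb := bpos (b := b)
  have hb1 : (1 : ℝ) ≤ b := by exact_mod_cast (by omega : 1 ≤ b)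
  let s : ℕ → (Fin n → ZMod b) → ℝ := fun l w => if X w l < Z / b ^ (n - l) then 1 else 0
  let h : ℕ → (Fin n → ZMod b) → ℝ := fun l w => s (l + 1) w - s l w
  let r : (Fin n → ZMod b) → ℝ := fun w => (if X w n ≤ Z then 1 else 0) - s (m - j) w

  have hs : ∀ w, (if X w n ≤ Z then (1 : ℝ) else 0) = ∑ l ∈ range (m - j), h l w + r w := by
    intro w
    simp only [h, r]
    rw [sum_range_sub (fun l => s l w)]
    have : s 0 w = 0 := by
      simp only [s, X, Nat.sub_zero, Nat.div_eq_of_lt hZ]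
      simp
    rw [this]
    ring
  have hh : ∀ l, l < m - j → ∀ w, |h l w| ≤ if X w l = Z / b ^ (n - l) then 1 else 0 := by
    intro l hl w
    apply ind_diff
    intro hR
    have e1 : X w (l + 1) / b = X w l := by
      have := X_div w l 1
      simpa using this
    have e2 : Z / b ^ (n - (l + 1)) / b = Z / b ^ (n - l) := by
      rw [Nat.div_div_eq_div_mul, ← pow_succ]
      congr 2
      omega
    rw [← e1, ← e2] at hR
    rw [div_lt_of_ne hR, e1, e2]
  have hr : ∀ w, |r w| ≤ if X w (m - j) = Z / b ^ (n - (m - j)) then 1 else 0 := by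
    intro w
    apply ind_diff
    intro hR
    have e1 := X_div' w (m - j) n (by omega)
    rw [← e1] at hR ⊢
    rw [← div_lt_of_ne hR]
    have : X w n ≠ Z := by
      intro h; exact hR (by rw [h])
    omega
  have hdecomp : U C1 C2 (fun v w => (∑ i ∈ range N, g i v) * (if X w n ≤ Z then 1 else 0))
      = ∑ l ∈ range (m - j), ∑ i ∈ range N, U C1 C2 (fun v w => g i v * h l w)
        + ∑ i ∈ range N, U C1 C2 (fun v w => g i v * r w) := by
    simp_rw [← U_sum]
    rw [← U_add]
    congr 1
    ext v w
    rw [hs w, mul_add, mul_sum, ← sum_mul]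
    congr 1
    apply sum_congr rfl
    intro l _
    rw [sum_mul]
  have hb12 : ∀ i l, i < N → l < m - j → |U C1 C2 (fun v w => g i v * h l w)|
      ≤ 2 * (b : ℝ) ^ (t + 2) / (b : ℝ) ^ (j + l) *
        (if 2 * m - t - (2 * j + 2 * l + 1) ≤ i then 1 / (b : ℝ) ^ i else 0) := by
    intro i l _ hl
    split_ifs with hi
    · have h1 := U_abs_le C1 C2 (fun v w => g i v * h l w) (Bx (j - 1) l Y (Z / b ^ (n - l)))
        (b / (b : ℝ) ^ i) (by
          intro v w
          rw [abs_mul, Bx, ← mul_assoc]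
          exact mul_le_mul (hgb i v) (hh l hl w) (abs_nonneg _)
            ((abs_nonneg _).trans (hgb i v)))
      have h2 := box_bound hb2 t ht hn C1 C2 hU (j - 1) l Y (Z / b ^ (n - l)) (by omega)
      calc _ ≤ _ := h1
        _ ≤ b / (b : ℝ) ^ i * (2 * (b : ℝ) ^ t / (b : ℝ) ^ (j - 1 + l)) := by gcongr
        _ ≤ b / (b : ℝ) ^ i * (2 * (b : ℝ) ^ t * (b / (b : ℝ) ^ (j + l))) := by
          rw [div_eq_mul_one_div (2 * (b : ℝ) ^ t)]
          gcongr ?_ * (_ * ?_)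
          rw [div_le_div_iff₀ (by positivity) (by positivity), one_mul, ← pow_succ']
          exact pow_le_pow_right₀ hb1 (by omega)
        _ = _ := by
          rw [pow_add _ t]
          ring
    · rw [mul_zero]
      have h1 : U C1 C2 (fun v w => g i v * h l w) = 0 := by
        unfold U
        rw [sub_eq_zero]
        apply hU j i (l + 1) (by omega)
        intro v v' w w' hv hw
        rw [hg i v v' hv]
        simp only [h, s]
        rw [X_congr w w' (l + 1) hw, X_congr w w' l (fun q hq => hw q (by omega))]
      rw [h1, abs_zero]
  have hb3 : ∀ i, |U C1 C2 (fun v w => g i v * r w)|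
      ≤ 2 * (b : ℝ) ^ (t + 2) / (b : ℝ) ^ m * (1 / (b : ℝ) ^ i) := by
    intro i
    have h1 := U_abs_le C1 C2 (fun v w => g i v * r w)
        (Bx (j - 1) (m - j) Y (Z / b ^ (n - (m - j))))
        (b / (b : ℝ) ^ i) (by
          intro v w
          rw [abs_mul, Bx, ← mul_assoc]
          exact mul_le_mul (hgb i v) (hr w) (abs_nonneg _)
            ((abs_nonneg _).trans (hgb i v)))
    have h2 := box_bound hb2 t ht hn C1 C2 hU (j - 1) (m - j) Y (Z / b ^ (n - (m - j))) (by omega)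
    calc _ ≤ _ := h1
      _ ≤ b / (b : ℝ) ^ i * (2 * (b : ℝ) ^ t / (b : ℝ) ^ (j - 1 + (m - j))) := by gcongr
      _ ≤ b / (b : ℝ) ^ i * (2 * (b : ℝ) ^ t * (b / (b : ℝ) ^ m)) := by
        rw [div_eq_mul_one_div (2 * (b : ℝ) ^ t)]
        gcongr ?_ * (_ * ?_)
        rw [div_le_div_iff₀ (by positivity) (by positivity), one_mul, ← pow_succ']
        exact pow_le_pow_right₀ hb1 (by omega)
      _ = _ := by
        rw [pow_add _ t]
        ring
  have hsum1 : ∀ l, l < m - j → ∑ i ∈ range N, |U C1 C2 (fun v w => g i v * h l w)|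
      ≤ 4 * (b : ℝ) ^ (2 * t + 3) / (b : ℝ) ^ m * (1 / (b : ℝ) ^ (m - j - l)) := by
    intro l hl
    calc _ ≤ ∑ i ∈ range N, 2 * (b : ℝ) ^ (t + 2) / (b : ℝ) ^ (j + l) *
        (if 2 * m - t - (2 * j + 2 * l + 1) ≤ i then 1 / (b : ℝ) ^ i else 0) :=
          sum_le_sum fun i hi => hb12 i l (mem_range.mp hi) hl
      _ ≤ 2 * (b : ℝ) ^ (t + 2) / (b : ℝ) ^ (j + l) *
          (2 / (b : ℝ) ^ (2 * m - t - (2 * j + 2 * l + 1))) := by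
        rw [← mul_sum]
        gcongr
        exact geo_tail hb2 _ _
      _ = 4 * (b : ℝ) ^ (t + 2) / (b : ℝ) ^ (j + l + (2 * m - t - (2 * j + 2 * l + 1))) := by
        rw [pow_add _ (j + l)]
        field_simp
        norm_num
      _ ≤ 4 * (b : ℝ) ^ (2 * t + 3) / (b : ℝ) ^ (m + (m - j - l)) := by
        rw [div_le_div_iff₀ (by positivity) (by positivity), mul_assoc, mul_assoc, ← pow_add,
          ← pow_add]
        exact mul_le_mul_of_nonneg_left (pow_le_pow_right₀ hb1 (by omega)) (by norm_num)
      _ = _ := by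
        rw [pow_add _ m]
        field_simp
  rw [hdecomp]
  calc _ ≤ ∑ l ∈ range (m - j), ∑ i ∈ range N, |U C1 C2 (fun v w => g i v * h l w)|
        + ∑ i ∈ range N, |U C1 C2 (fun v w => g i v * r w)| := by
        refine (abs_add_le _ _).trans (add_le_add ?_ (abs_sum_le_sum_abs _ _))
        refine (abs_sum_le_sum_abs _ _).trans (sum_le_sum fun l _ => abs_sum_le_sum_abs _ _)
    _ ≤ ∑ l ∈ range (m - j), 4 * (b : ℝ) ^ (2 * t + 3) / (b : ℝ) ^ m * (1 / (b : ℝ) ^ (m - j - l))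
        + ∑ i ∈ range N, 2 * (b : ℝ) ^ (t + 2) / (b : ℝ) ^ m * (1 / (b : ℝ) ^ i) := by
        gcongr with l hl i hi
        · exact hsum1 l (mem_range.mp hl)
        · exact hb3 i
    _ ≤ 4 * (b : ℝ) ^ (2 * t + 3) / (b : ℝ) ^ m * 2
        + 2 * (b : ℝ) ^ (2 * t + 3) / (b : ℝ) ^ m * 2 := by
        rw [← mul_sum, ← mul_sum]
        have h1 := geo_rev hb2 (m - j)
        have h2 := geo hb2 N
        have h3 : (b : ℝ) ^ (t + 2) ≤ (b : ℝ) ^ (2 * t + 3) := pow_le_pow_right₀ hb1 (by omega)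
        refine add_le_add (mul_le_mul_of_nonneg_left h1 (by positivity)) ?_
        refine mul_le_mul ?_ h2 (sum_nonneg fun i _ => by positivity) (by positivity)
        exact div_le_div_of_nonneg_right (by linarith) (by positivity)
    _ ≤ _ := by
        have : 0 ≤ (b : ℝ) ^ (2 * t + 3) / (b : ℝ) ^ m := by positivity
        rw [mul_div_assoc, mul_div_assoc, mul_div_assoc]
        linarith

end bounds

section azuma

lemma sum_range_mul' (a c : ℕ) (f : ℕ → ℝ) :
    ∑ k ∈ range (a * c), f k = ∑ Y ∈ range a, ∑ η ∈ range c, f (c * Y + η) := by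
  induction a with
  | zero => simp
  | succ a ih =>
    rw [Nat.succ_mul, sum_range_add, ih, sum_range_succ]
    simp [mul_comm]

lemma exp_le_chord (c x : ℝ) (hc : 0 < c) (hx : |x| ≤ c) :
    Real.exp x ≤ Real.cosh c + x / c * Real.sinh c := by
  rw [abs_le] at hx
  have ha : 0 ≤ (c + x) / (2 * c) := div_nonneg (by linarith) (by linarith)
  have ha' : 0 ≤ (c - x) / (2 * c) := div_nonneg (by linarith) (by linarith)
  have h := convexOn_exp.2 (Set.mem_univ c) (Set.mem_univ (-c)) ha ha'
    (by field_simp; ring)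
  simp only [smul_eq_mul] at h
  have e : (c + x) / (2 * c) * c + (c - x) / (2 * c) * -c = x := by field_simp; ring
  rw [e] at h
  refine h.trans (le_of_eq ?_)
  rw [Real.cosh_eq, Real.sinh_eq]
  field_simp
  ring

lemma azuma (b : ℕ) (c : ℝ) (hc : 0 < c) (δ : ℕ → ℕ → ℝ) (m : ℕ)
    (hδ : ∀ j < m, ∀ Y, |δ j Y| ≤ c)
    (h0 : ∀ j < m, ∀ Y, ∑ η ∈ range b, δ j (b * Y + η) = 0) :
    ∑ Y ∈ range (b ^ m), Real.exp (∑ j ∈ range m, δ j (Y / b ^ (m - (j + 1))))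
      ≤ (b : ℝ) ^ m * Real.exp (c ^ 2 / 2) ^ m := by
  induction m with
  | zero => simp
  | succ m ih =>
    have ih' := ih (fun j hj => hδ j (by omega)) (fun j hj => h0 j (by omega))
    rw [pow_succ, sum_range_mul']
    have h1 : ∀ Y, ∑ η ∈ range b, Real.exp (δ m (b * Y + η)) ≤ b * Real.exp (c ^ 2 / 2) := by
      intro Y
      calc _ ≤ ∑ η ∈ range b, (Real.cosh c + δ m (b * Y + η) / c * Real.sinh c) :=
            sum_le_sum fun η _ => exp_le_chord c _ hc (hδ m (by omega) _)
        _ = b * Real.cosh c := by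
            rw [sum_add_distrib, ← sum_mul, ← sum_div, h0 m (by omega)]
            simp
        _ ≤ _ := by
            gcongr
            exact Real.cosh_le_exp_half_sq c
    have h2 : ∀ Y, ∀ η ∈ range b,
        Real.exp (∑ j ∈ range (m + 1), δ j ((b * Y + η) / b ^ (m + 1 - (j + 1))))
        = Real.exp (∑ j ∈ range m, δ j (Y / b ^ (m - (j + 1)))) * Real.exp (δ m (b * Y + η)) := by
      intro Y η hη
      rw [mem_range] at hη
      rw [← Real.exp_add, sum_range_succ]
      congr 2
      · apply sum_congr rfl
        intro j hj
        rw [mem_range] at hj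
        rw [show m + 1 - (j + 1) = (m - (j + 1)) + 1 by omega, pow_succ', ← Nat.div_div_eq_div_mul,
          Nat.mul_add_div (by omega), Nat.div_eq_of_lt hη, add_zero]
      · simp
    calc _ = ∑ Y ∈ range (b ^ m), Real.exp (∑ j ∈ range m, δ j (Y / b ^ (m - (j + 1)))) *
          ∑ η ∈ range b, Real.exp (δ m (b * Y + η)) := by
          apply sum_congr rfl
          intro Y _
          rw [mul_sum]
          exact sum_congr rfl (h2 Y)
      _ ≤ ∑ Y ∈ range (b ^ m), Real.exp (∑ j ∈ range m, δ j (Y / b ^ (m - (j + 1)))) *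
          (b * Real.exp (c ^ 2 / 2)) := by
          gcongr with Y _
          exact h1 Y
      _ ≤ ((b : ℝ) ^ m * Real.exp (c ^ 2 / 2) ^ m) * (b * Real.exp (c ^ 2 / 2)) := by
          rw [← sum_mul]
          gcongr
      _ = _ := by ring

lemma azuma' (b : ℕ) (hb : 0 < b) (c : ℝ) (hc : 0 < c) (δ : ℕ → ℕ → ℝ) (m n : ℕ) (hmn : m ≤ n)
    (hδ : ∀ j < m, ∀ Y, |δ j Y| ≤ c)
    (h0 : ∀ j < m, ∀ Y, ∑ η ∈ range b, δ j (b * Y + η) = 0) :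
    ∑ k ∈ range (b ^ n), Real.exp (∑ j ∈ range m, δ j (k / b ^ (n - (j + 1))))
      ≤ (b : ℝ) ^ n * Real.exp (m * c ^ 2 / 2) := by
  obtain ⟨s, rfl⟩ : ∃ s, n = m + s := ⟨n - m, by omega⟩
  rw [pow_add, sum_range_mul']
  have h2 : ∀ Y, ∀ η ∈ range (b ^ s),
        Real.exp (∑ j ∈ range m, δ j ((b ^ s * Y + η) / b ^ (m + s - (j + 1))))
        = Real.exp (∑ j ∈ range m, δ j (Y / b ^ (m - (j + 1)))) := by
    intro Y η hη
    rw [mem_range] at hη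
    congr 1
    apply sum_congr rfl
    intro j hj
    rw [mem_range] at hj
    rw [show m + s - (j + 1) = s + (m - (j + 1)) by omega, pow_add, ← Nat.div_div_eq_div_mul,
          Nat.mul_add_div (by positivity), Nat.div_eq_of_lt hη, add_zero]
  have h3 : ∀ Y ∈ range (b ^ m), ∑ η ∈ range (b ^ s),
        Real.exp (∑ j ∈ range m, δ j ((b ^ s * Y + η) / b ^ (m + s - (j + 1))))
        = (b : ℝ) ^ s * Real.exp (∑ j ∈ range m, δ j (Y / b ^ (m - (j + 1)))) := by
    intro Y _
    rw [sum_congr rfl (h2 Y)]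
    simp
  rw [sum_congr rfl h3, ← mul_sum]
  calc _ ≤ (b : ℝ) ^ s * ((b : ℝ) ^ m * Real.exp (c ^ 2 / 2) ^ m) := by
        gcongr
        exact azuma b c hc δ m hδ h0
    _ = _ := by
        rw [← Real.exp_nat_mul, pow_add, mul_div_assoc]
        ring

end azuma

section decomp
set_option linter.unusedSectionVars false
variable {b m n : ℕ} [NeZero b]

/-- conditional expectation of the indicator -/
noncomputable def S (v : Fin n → ZMod b) (j Y : ℕ) : ℝ :=
  (if X v j < Y then 1 else 0) + (if X v j = Y then 1 else 0) * (1 - T v j)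

/-- coefficient A -/
noncomputable def cA (b e η : ℕ) : ℝ := (if e ≤ η then 1 else 0) - 1 + (e : ℝ) / b
/-- coefficient B -/
noncomputable def cB (b e η : ℕ) : ℝ := 1 / (b : ℝ) - (if η = e then 1 else 0)

/-- martingale difference -/
noncomputable def dd (v : Fin n → ZMod b) (j Y : ℕ) : ℝ :=
  (if X v j = Y / b then 1 else 0) * (cA b (dg v j) (Y % b) + cB b (dg v j) (Y % b) * T v (j + 1))

/-- pieces of the martingale difference -/
noncomputable def gg (j Y i : ℕ) (v : Fin n → ZMod b) : ℝ :=
  match i with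
  | 0 => (if X v j = Y / b then 1 else 0) * cA b (dg v j) (Y % b)
  | i + 1 => (if X v j = Y / b then 1 else 0) * cB b (dg v j) (Y % b) *
      ((dg v (j + 1 + i) : ℝ) / (b : ℝ) ^ (i + 1))

lemma dd_eq_sum (v : Fin n → ZMod b) (j Y : ℕ) :
    dd v j Y = ∑ i ∈ range (n - (j + 1) + 1), gg j Y i v := by
  rw [sum_range_succ']
  simp only [gg, dd, T]
  rw [← mul_sum]
  ring

lemma S_step (v : Fin n → ZMod b) (j Y : ℕ) (hj : j < n) :
    S v (j + 1) Y = S v j (Y / b) + dd v j Y := by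
  have hb := bpos (b := b)
  have hb' : 0 < b := Nat.pos_of_ne_zero (NeZero.ne b)
  have hT := T_step v j hj
  have he := dg_lt v j
  have hY := Nat.div_add_mod Y b
  have hm := Nat.mod_lt Y hb'
  have hX : X v (j + 1) / b = X v j := by simpa using X_div v j 1
  unfold S dd
  by_cases h : X v j = Y / b
  · have hX2 : X v (j + 1) = b * (Y / b) + dg v j := by rw [X, h]
    have c1 : X v (j + 1) < Y ↔ dg v j < Y % b := by omega
    have c2 : X v (j + 1) = Y ↔ dg v j = Y % b := by omega
    simp only [c1, c2, h, lt_irrefl, if_true, if_false, cA, cB]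
    have hT' : T v j = (dg v j + T v (j + 1)) / b := by
      rw [← hT]; field_simp
    rw [hT']
    rcases lt_trichotomy (dg v j) (Y % b) with h1 | h1 | h1
    · rw [if_pos h1, if_neg h1.ne, if_pos h1.le, if_neg h1.ne']
      ring
    · rw [if_neg (by omega), if_pos h1, if_pos h1.le, if_pos h1.symm]
      ring
    · rw [if_neg (by omega), if_neg h1.ne', if_neg (by omega), if_neg h1.ne]
      ring
  · have c1 : X v (j + 1) < Y ↔ X v j < Y / b := by
      rw [← hX] at h ⊢
      exact div_lt_of_ne h
    have c2 : X v (j + 1) ≠ Y := by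
      intro h1
      apply h
      rw [← hX, h1]
    simp [c1, c2, h]

lemma S_sum (v : Fin n → ZMod b) (k : ℕ) (hk : k < b ^ n) (m : ℕ) (hm : m ≤ n) :
    S v m (k / b ^ (n - m)) = (1 - T v 0) + ∑ j ∈ range m, dd v j (k / b ^ (n - (j + 1))) := by
  induction m with
  | zero => simp [S, X, Nat.div_eq_of_lt hk]
  | succ m ih =>
    rw [S_step v m _ (by omega), sum_range_succ, ← add_assoc, ← ih (by omega)]
    congr 2
    rw [Nat.div_div_eq_div_mul, ← pow_succ]
    congr 2
    omega

lemma cA_abs (e η : ℕ) (he : e < b) : |cA b e η| ≤ 1 := by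
  have hb := bpos (b := b)
  have h1 : (e : ℝ) / b ≤ 1 := by
    rw [div_le_one hb]; exact_mod_cast he.le
  have h0 : 0 ≤ (e : ℝ) / b := by positivity
  unfold cA
  rw [abs_le]
  split_ifs <;> constructor <;> linarith

lemma cB_abs (e η : ℕ) : |cB b e η| ≤ 1 := by
  have hb := bpos (b := b)
  have h1 : 1 / (b : ℝ) ≤ 1 := by
    rw [div_le_one hb]; exact_mod_cast Nat.pos_of_ne_zero (NeZero.ne b)
  have h0 : 0 ≤ 1 / (b : ℝ) := by positivity
  unfold cB
  rw [abs_le]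
  split_ifs <;> constructor <;> linarith

lemma dd_mean (v : Fin n → ZMod b) (j Y : ℕ) : ∑ η ∈ range b, dd v j (b * Y + η) = 0 := by
  have hb := bpos (b := b)
  have hb' : 0 < b := Nat.pos_of_ne_zero (NeZero.ne b)
  have he := dg_lt v j
  have h1 : ∀ η ∈ range b, dd v j (b * Y + η) = (if X v j = Y then 1 else 0) *
      (cA b (dg v j) η + cB b (dg v j) η * T v (j + 1)) := by
    intro η hη
    rw [mem_range] at hη
    unfold dd
    rw [Nat.mul_add_div hb', Nat.div_eq_of_lt hη, add_zero, Nat.mul_add_mod, Nat.mod_eq_of_lt hη]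
  rw [sum_congr rfl h1, ← mul_sum, sum_add_distrib, ← sum_mul]
  have hA : ∑ η ∈ range b, cA b (dg v j) η = 0 := by
    unfold cA
    rw [sum_add_distrib, sum_sub_distrib, sum_boole]
    have : (range b).filter (fun η => dg v j ≤ η) = Finset.Ico (dg v j) b := by
      ext x; simp [and_comm]
    rw [this, Nat.card_Ico, Nat.cast_sub he.le]
    simp
    field_simp
    ring
  have hB : ∑ η ∈ range b, cB b (dg v j) η = 0 := by
    unfold cB
    rw [sum_sub_distrib]
    simp [he]
  rw [hA, hB]
  simp

lemma U_mul_const_zero (C1 C2 : Matrix (Fin n) (Fin m) (ZMod b)) :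
    U C1 C2 (fun _ _ => 0) = 0 := by
  simp [U, EP, EG]

lemma decomp (hb2 : 2 ≤ b) (t : ℕ) (ht : t ≤ 2 * m) (hn : 2 * m ≤ n)
    (C1 C2 : Matrix (Fin n) (Fin m) (ZMod b)) (hU : Uni t C1 C2) (Z : ℕ) (hZ : Z < b ^ n) :
    ∃ δ : ℕ → ℕ → ℝ, (∀ j < m, ∀ Y, |δ j Y| ≤ 12 * (b : ℝ) ^ (2 * t + 3) / (b : ℝ) ^ m) ∧
      (∀ j < m, ∀ Y, ∑ η ∈ range b, δ j (b * Y + η) = 0) ∧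
      ∀ k < b ^ n, |U C1 C2 (fun v w => (if X v n ≤ k then 1 else 0) * (if X w n ≤ Z then 1 else 0))
        - ∑ j ∈ range m, δ j (k / b ^ (n - (j + 1)))| ≤ 14 * (b : ℝ) ^ (2 * t + 3) / (b : ℝ) ^ m := by
  have hb := bpos (b := b)
  have hb1 : (1 : ℝ) ≤ b := by exact_mod_cast (by omega : 1 ≤ b)
  refine ⟨fun j Y => U C1 C2 (fun v w => dd v j Y * (if X w n ≤ Z then 1 else 0)), ?_, ?_, ?_⟩
  · intro j hj Y
    simp_rw [dd_eq_sum]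
    apply main_bound hb2 t ht hn C1 C2 hU (j + 1) (Y / b) Z (by omega) hZ
    · intro i v v' h
      have e1 : X v j = X v' j := X_congr _ _ _ fun q hq => h q (Or.inl (by omega))
      have e2 : dg v j = dg v' j := dg_congr _ _ _ fun q hq => h q (Or.inl (by omega))
      cases i with
      | zero => simp only [gg, e1, e2]
      | succ i =>
        have e3 : dg v (j + 1 + i) = dg v' (j + 1 + i) :=
          dg_congr _ _ _ fun q hq => h q (Or.inr (by omega))
        simp only [gg, e1, e2, e3]
    · intro i v
      simp only [Nat.add_sub_cancel]
      by_cases hX : X v j = Y / b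
      · cases i with
        | zero =>
          simp only [gg, hX, if_true, one_mul, pow_zero, div_one, mul_one]
          exact (cA_abs _ _ (dg_lt v j)).trans hb1
        | succ i =>
          simp only [gg, hX, if_true, one_mul, mul_one]
          rw [abs_mul, abs_of_nonneg (by positivity : (0 : ℝ) ≤ (dg v (j + 1 + i) : ℝ) / (b : ℝ) ^ (i + 1))]
          have h1 := cB_abs (b := b) (dg v j) (Y % b)
          have h2 : (dg v (j + 1 + i) : ℝ) ≤ b := by exact_mod_cast (dg_lt v _).le
          calc _ ≤ 1 * ((b : ℝ) / (b : ℝ) ^ (i + 1)) := by gcongr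
            _ = _ := one_mul _
      · cases i <;> simp [gg, hX]
  · intro j hj Y
    rw [← U_sum]
    have : (fun (v w : Fin n → ZMod b) => ∑ η ∈ range b, dd v j (b * Y + η) *
        (if X w n ≤ Z then (1 : ℝ) else 0)) = fun _ _ => 0 := by
      ext v w
      rw [← sum_mul, dd_mean, zero_mul]
    rw [this]
    exact U_mul_const_zero C1 C2
  · intro k hk
    let R : (Fin n → ZMod b) → ℝ := fun v => (if X v n ≤ k then 1 else 0) - S v m (k / b ^ (n - m))
    have hR : ∀ v, |R v| ≤ if X v m = k / b ^ (n - m) then 1 else 0 := by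
      intro v
      have e1 := X_div' v m n (by omega)
      simp only [R, S]
      by_cases h : X v m = k / b ^ (n - m)
      · simp only [h, lt_irrefl, if_true, if_false]
        have h0 := T_nonneg v m
        have h1 := T_le_one v m
        rw [abs_le]
        split_ifs <;> constructor <;> linarith
      · simp only [h, if_false]
        have h2 : X v n ≤ k ↔ X v m < k / b ^ (n - m) := by
          rw [← e1] at h ⊢
          rw [← div_lt_of_ne h]
          have : X v n ≠ k := by
            intro h'; exact h (by rw [h'])
          omega
        simp [h2]
    have hT : |U C1 C2 (fun v w => (1 - T v 0) * (if X w n ≤ Z then 1 else 0))|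
        ≤ 12 * (b : ℝ) ^ (2 * t + 3) / (b : ℝ) ^ m := by
      let g : ℕ → (Fin n → ZMod b) → ℝ := fun i v =>
        match i with
        | 0 => 1
        | i + 1 => - ((dg v i : ℝ) / (b : ℝ) ^ (i + 1))
      have e : ∀ v, 1 - T v 0 = ∑ i ∈ range (n + 1), g i v := by
        intro v
        rw [sum_range_succ']
        simp only [g, T, sum_neg_distrib, Nat.sub_zero, zero_add]
        ring
      simp_rw [e]
      apply main_bound hb2 t ht hn C1 C2 hU 0 0 Z (by omega) hZ
      · intro i v v' h
        cases i with
        | zero => rfl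
        | succ i =>
          have e3 : dg v i = dg v' i := dg_congr _ _ _ fun q hq => h q (Or.inr (by omega))
          simp only [g, e3]
      · intro i v
        simp only [Nat.zero_sub, X, if_true, mul_one]
        cases i with
        | zero => simpa [g] using hb1
        | succ i =>
          simp only [g]
          have h2 : (dg v i : ℝ) ≤ b := by exact_mod_cast (dg_lt v _).le
          rw [abs_neg, abs_of_nonneg (by positivity)]
          gcongr
    have hRU : |U C1 C2 (fun v w => R v * (if X w n ≤ Z then 1 else 0))|
        ≤ 2 * (b : ℝ) ^ (2 * t + 3) / (b : ℝ) ^ m := by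
      have h1 := U_abs_le C1 C2 (fun v w => R v * (if X w n ≤ Z then 1 else 0))
        (Bx m 0 (k / b ^ (n - m)) 0) 1 (by
          intro v w
          rw [one_mul, Bx, abs_mul]
          refine mul_le_mul (hR v) ?_ (abs_nonneg _) ((abs_nonneg _).trans (hR v))
          simp only [X, if_true]
          split_ifs <;> simp)
      rw [one_mul] at h1
      refine (h1.trans (box_bound hb2 t ht hn C1 C2 hU m 0 _ 0 (by omega))).trans ?_
      rw [add_zero]
      gcongr 2 * ?_ / _
      exact pow_le_pow_right₀ hb1 (by omega)
    have key : U C1 C2 (fun v w => (if X v n ≤ k then 1 else 0) * (if X w n ≤ Z then 1 else 0))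
        = U C1 C2 (fun v w => (1 - T v 0) * (if X w n ≤ Z then 1 else 0))
        + ∑ j ∈ range m, U C1 C2 (fun v w => dd v j (k / b ^ (n - (j + 1))) *
            (if X w n ≤ Z then 1 else 0))
        + U C1 C2 (fun v w => R v * (if X w n ≤ Z then 1 else 0)) := by
      rw [← U_sum, ← U_add, ← U_add]
      congr 1
      ext v w
      rw [← sum_mul, ← add_mul, ← S_sum v k hk m (by omega), ← add_mul]
      simp only [R]
      ring
    rw [key]
    calc _ = |U C1 C2 (fun v w => (1 - T v 0) * (if X w n ≤ Z then 1 else 0))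
          + U C1 C2 (fun v w => R v * (if X w n ≤ Z then 1 else 0))| := by
          congr 1; ring
      _ ≤ _ := abs_add_le _ _
      _ ≤ 12 * (b : ℝ) ^ (2 * t + 3) / (b : ℝ) ^ m + 2 * (b : ℝ) ^ (2 * t + 3) / (b : ℝ) ^ m :=
          add_le_add hT hRU
      _ = _ := by ring

end decomp

section final

lemma integral_cells (f : ℝ × ℝ → ℝ) (hf : ∀ y, 0 ≤ f y) (G : ℕ → ℕ → ℝ) (hG : ∀ k Z, 0 ≤ G k Z)
    (N : ℕ) (hN : 0 < N)
    (h : ∀ k < N, ∀ Z < N, ∀ y : ℝ × ℝ, (k : ℝ) < N * y.1 → N * y.1 ≤ k + 1 →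
      (Z : ℝ) < N * y.2 → N * y.2 ≤ Z + 1 → f y ≤ G k Z) :
    ∫ y in (Set.Ico (0:ℝ) 1) ×ˢ (Set.Ico (0:ℝ) 1), f y
      ≤ (∑ Z ∈ range N, ∑ k ∈ range N, G k Z) / ((N : ℝ) * N) := by
  have hN' : (0 : ℝ) < N := by exact_mod_cast hN
  let I : ℕ → Set ℝ := fun k => Set.Ioc ((k : ℝ) / N) (((k : ℝ) + 1) / N)
  have hI : ∀ k x, x ∈ I k ↔ (k : ℝ) < N * x ∧ N * x ≤ k + 1 := by
    intro k x
    simp only [I, Set.mem_Ioc]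
    rw [div_lt_iff₀ hN', le_div_iff₀ hN', mul_comm]
  have hQ : ((Set.Ico (0:ℝ) 1) ×ˢ (Set.Ico (0:ℝ) 1) : Set (ℝ × ℝ)) =ᵐ[volume]
      ((Set.Ioc (0:ℝ) 1) ×ˢ (Set.Ioc (0:ℝ) 1) : Set (ℝ × ℝ)) := by
    rw [Measure.volume_eq_prod]
    exact Measure.set_prod_ae_eq Ico_ae_eq_Ioc Ico_ae_eq_Ioc
  rw [setIntegral_congr_set hQ]
  set Q : Set (ℝ × ℝ) := (Set.Ioc (0:ℝ) 1) ×ˢ (Set.Ioc (0:ℝ) 1) with hQdef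
  have hQm : MeasurableSet Q := measurableSet_Ioc.prod measurableSet_Ioc
  have hQfin : volume Q ≠ ⊤ := by
    rw [hQdef, Measure.volume_eq_prod, Measure.prod_prod]
    simp
  have : IsFiniteMeasure (volume.restrict Q) := ⟨by
    rw [Measure.restrict_apply_univ]; exact lt_top_iff_ne_top.mpr hQfin⟩
  have hcm : ∀ k Z, MeasurableSet (I k ×ˢ I Z) := fun k Z =>
    measurableSet_Ioc.prod measurableSet_Ioc
  have hintegr : ∀ k Z, Integrable ((I k ×ˢ I Z).indicator (fun _ => G k Z)) (volume.restrict Q) :=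
    fun k Z => (integrable_const _).indicator (hcm k Z)
  have hcell : ∀ k Z, ∫ y in Q, (I k ×ˢ I Z).indicator (fun _ => G k Z) y
      ≤ G k Z / ((N : ℝ) * N) := by
    intro k Z
    rw [integral_indicator_const _ (hcm k Z), smul_eq_mul]
    have hv : (volume : Measure (ℝ × ℝ)) (I k ×ˢ I Z) = ENNReal.ofReal (1 / ((N : ℝ) * N)) := by
      rw [Measure.volume_eq_prod, Measure.prod_prod, Real.volume_Ioc, Real.volume_Ioc,
        ← ENNReal.ofReal_mul]
      · congr 1
        field_simp
        ring
      · rw [← sub_div]; simp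
    have h1 : (volume.restrict Q).real (I k ×ˢ I Z) ≤ 1 / ((N : ℝ) * N) := by
      unfold Measure.real
      apply ENNReal.toReal_le_of_le_ofReal (by positivity)
      rw [← hv]
      exact Measure.restrict_apply_le _ _
    calc _ ≤ 1 / ((N : ℝ) * N) * G k Z := mul_le_mul_of_nonneg_right h1 (hG k Z)
      _ = _ := by ring
  calc ∫ y in Q, f y ≤ ∫ y in Q, ∑ Z ∈ range N, ∑ k ∈ range N,
        (I k ×ˢ I Z).indicator (fun _ => G k Z) y := by
        apply integral_mono_of_nonneg
        · exact Filter.Eventually.of_forall hf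
        · exact integrable_finsetSum _ fun Z _ => integrable_finsetSum _ fun k _ => hintegr k Z
        · rw [Filter.EventuallyLE, ae_restrict_iff' hQm]
          refine Filter.Eventually.of_forall fun y hy => ?_
          have hex : ∀ x ∈ Set.Ioc (0 : ℝ) 1, ∃ k < N, (k : ℝ) < N * x ∧ N * x ≤ k + 1 := by
            intro x hx
            have hpos : 0 < N * x := mul_pos hN' hx.1
            have hc : 0 < ⌈N * x⌉₊ := Nat.ceil_pos.mpr hpos
            refine ⟨⌈N * x⌉₊ - 1, ?_, ?_, ?_⟩
            · have : ⌈N * x⌉₊ ≤ N := by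
                rw [Nat.ceil_le]
                nlinarith [hx.2]
              omega
            · rw [← Nat.lt_ceil]; omega
            · rw [Nat.cast_sub hc]
              have := Nat.le_ceil (N * x)
              push_cast
              linarith
          obtain ⟨k, hk, hk1, hk2⟩ := hex y.1 hy.1
          obtain ⟨Z, hZ, hZ1, hZ2⟩ := hex y.2 hy.2
          have hy' : y ∈ I k ×ˢ I Z := ⟨(hI _ _).mpr ⟨hk1, hk2⟩, (hI _ _).mpr ⟨hZ1, hZ2⟩⟩
          have hnn : ∀ k Z, 0 ≤ (I k ×ˢ I Z).indicator (fun _ => G k Z) y := fun k Z =>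
            Set.indicator_nonneg (fun _ _ => hG k Z) _
          calc f y ≤ G k Z := h k hk Z hZ y hk1 hk2 hZ1 hZ2
            _ = (I k ×ˢ I Z).indicator (fun _ => G k Z) y := by
              rw [Set.indicator_of_mem hy']
            _ ≤ ∑ k ∈ range N, (I k ×ˢ I Z).indicator (fun _ => G k Z) y :=
              single_le_sum (f := fun k => (I k ×ˢ I Z).indicator (fun _ => G k Z) y)
                (fun k _ => hnn k Z) (mem_range.mpr hk)
            _ ≤ _ :=
              single_le_sum (f := fun Z => ∑ k ∈ range N, (I k ×ˢ I Z).indicator (fun _ => G k Z) y)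
                (fun Z _ => sum_nonneg fun k _ => hnn k Z) (mem_range.mpr hZ)
    _ = ∑ Z ∈ range N, ∑ k ∈ range N, ∫ y in Q, (I k ×ˢ I Z).indicator (fun _ => G k Z) y := by
        rw [integral_finsetSum _ fun Z _ => integrable_finsetSum _ fun k _ => hintegr k Z]
        refine sum_congr rfl fun Z _ => ?_
        rw [integral_finsetSum _ fun k _ => hintegr k Z]
    _ ≤ ∑ Z ∈ range N, ∑ k ∈ range N, G k Z / ((N : ℝ) * N) :=
        sum_le_sum fun Z _ => sum_le_sum fun k _ => hcell k Z
    _ = _ := by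
        simp_rw [← sum_div]

variable {b m n : ℕ} [NeZero b]

lemma cell_iff (v : Fin n → ZMod b) (k : ℕ) (y : ℝ) (h1 : (k : ℝ) < (b ^ n : ℕ) * y)
    (h2 : (b ^ n : ℕ) * y ≤ k + 1) :
    (∑ i : Fin n, ((v i).val : ℝ) / (b : ℝ) ^ ((i : ℕ) + 1)) < y ↔ X v n ≤ k := by
  have hb := bpos (b := b)
  have hX := X_real v
  set x := ∑ i : Fin n, ((v i).val : ℝ) / (b : ℝ) ^ ((i : ℕ) + 1)
  have hp : (0 : ℝ) < (b : ℝ) ^ n := by positivity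
  push_cast at h1 h2
  constructor
  · intro h
    have h3 : (X v n : ℝ) < k + 1 := by
      rw [← hX]
      nlinarith
    have : X v n < k + 1 := by exact_mod_cast h3
    omega
  · intro h
    have h3 : (X v n : ℝ) ≤ k := by exact_mod_cast h
    rw [← hX] at h3
    by_contra hc
    push Not at hc
    nlinarith

lemma EG_ind (k Z : ℕ) (hk : k < b ^ n) (hZ : Z < b ^ n) :
    EG (b := b) (n := n) (fun v w => (if X v n ≤ k then 1 else 0) * (if X w n ≤ Z then 1 else 0))
      = ((k : ℝ) + 1) * (Z + 1) / ((b : ℝ) ^ n * (b : ℝ) ^ n) := by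
  have hc : ∀ k < b ^ n, ∑ v : Fin n → ZMod b, (if X v n ≤ k then (1 : ℝ) else 0) = k + 1 := by
    intro k hk
    rw [sum_X (fun x => if x ≤ k then (1 : ℝ) else 0), sum_boole]
    have : (range (b ^ n)).filter (fun x => x ≤ k) = range (k + 1) := by
      ext x
      simp only [mem_filter, mem_range]
      omega
    rw [this, card_range]
    push_cast
    rfl
  unfold EG
  simp_rw [← mul_sum]
  rw [← sum_mul, hc k hk, hc Z hZ]

lemma disc_cell (hn : 2 * m ≤ n) (C1 C2 : Matrix (Fin n) (Fin m) (ZMod b)) (k Z : ℕ)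
    (hk : k < b ^ n) (hZ : Z < b ^ n) (y : ℝ × ℝ)
    (h1 : (k : ℝ) < (b ^ n : ℕ) * y.1) (h2 : (b ^ n : ℕ) * y.1 ≤ k + 1)
    (h3 : (Z : ℝ) < (b ^ n : ℕ) * y.2) (h4 : (b ^ n : ℕ) * y.2 ≤ Z + 1) :
    |discAt (digitalNetPoint b m n C1 C2) y| ≤
      |U C1 C2 (fun v w => (if X v n ≤ k then 1 else 0) * (if X w n ≤ Z then 1 else 0))|
        + 2 / (b : ℝ) ^ m := by
  have hb := bpos (b := b)
  have hb1 : (1 : ℝ) ≤ b := by exact_mod_cast Nat.pos_of_ne_zero (NeZero.ne b)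
  set F : (Fin n → ZMod b) → (Fin n → ZMod b) → ℝ :=
    fun v w => (if X v n ≤ k then 1 else 0) * (if X w n ≤ Z then 1 else 0) with hF
  have hEP : ((Finset.univ.filter (fun i => (digitalNetPoint b m n C1 C2 i).1 < y.1 ∧
      (digitalNetPoint b m n C1 C2 i).2 < y.2)).card : ℝ) /
      (Fintype.card (Fin m → Fin b) : ℝ) = EP C1 C2 F := by
    unfold EP
    have hbij : Function.Bijective (fun (a : Fin m → Fin b) (j : Fin m) => ((a j : ℕ) : ZMod b)) := by
      rw [Fintype.bijective_iff_injective_and_card]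
      refine ⟨?_, by simp [ZMod.card]⟩
      intro a a' h
      ext j
      have := congrFun h j
      simp only at this
      have h' := congrArg ZMod.val this
      rwa [ZMod.val_natCast_of_lt (a j).2, ZMod.val_natCast_of_lt (a' j).2] at h'
    rw [← hbij.sum_comp (fun a => F (C1.mulVec a) (C2.mulVec a))]
    congr 1
    · rw [← sum_boole]
      apply sum_congr rfl
      intro a _
      simp only [digitalNetPoint, hF, cell_iff _ k y.1 h1 h2, cell_iff _ Z y.2 h3 h4]
      split_ifs <;> simp_all
    · simp
  unfold discAt
  rw [hEP]
  have hEG := EG_ind (b := b) (n := n) k Z hk hZ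
  rw [← hF] at hEG
  have hsplit : EP C1 C2 F - y.1 * y.2 = U C1 C2 F + (EG F - y.1 * y.2) := by
    unfold U; ring
  rw [hsplit]
  refine (abs_add_le _ _).trans ?_
  gcongr
  rw [hEG]
  set N : ℝ := (b : ℝ) ^ n with hN
  have hNpos : 0 < N := by positivity
  push_cast at h1 h2 h3 h4
  rw [← hN] at h1 h2 h3 h4
  have hk' : (k : ℝ) + 1 ≤ N := by
    rw [hN]; exact_mod_cast hk
  have hZ' : (Z : ℝ) + 1 ≤ N := by
    rw [hN]; exact_mod_cast hZ
  have hk0 : (0 : ℝ) ≤ k := by positivity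
  have hZ0 : (0 : ℝ) ≤ Z := by positivity
  have hle : |((k : ℝ) + 1) * (Z + 1) / (N * N) - y.1 * y.2| ≤ 2 / N := by
    have e : ((k : ℝ) + 1) * (Z + 1) / (N * N) - y.1 * y.2
        = (((k : ℝ) + 1) * (Z + 1) - (N * y.1) * (N * y.2)) / (N * N) := by
      field_simp
    have e2 : 2 / N = (2 * N) / (N * N) := by field_simp
    rw [e, e2, abs_div, abs_of_pos (by positivity : 0 < N * N)]
    gcongr
    set p := N * y.1
    set q := N * y.2
    rw [abs_le]
    constructor
    · nlinarith
    · nlinarith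
  refine hle.trans ?_
  gcongr
  rw [hN]
  exact pow_le_pow_right₀ hb1 (by omega)

end final


lemma pow_le_exp (p : ℝ) (hp : 1 ≤ p) (w : ℝ) (hw : 0 ≤ w) :
    (w + 1) ^ p ≤ p ^ p * Real.exp (1 + w) := by
  have hp0 : 0 < p := by linarith
  have h1 : (w + 1) / p ≤ Real.exp ((w + 1) / p) := by
    have := Real.add_one_le_exp ((w + 1) / p)
    linarith
  have h2 : w + 1 ≤ p * Real.exp ((w + 1) / p) := by
    rw [div_le_iff₀ hp0] at h1
    linarith
  have h3 : (w + 1) ^ p ≤ (p * Real.exp ((w + 1) / p)) ^ p :=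
    Real.rpow_le_rpow (by linarith) h2 hp0.le
  rw [Real.mul_rpow hp0.le (Real.exp_pos _).le, ← Real.exp_mul, div_mul_cancel₀ _ hp0.ne',
    add_comm w 1] at h3
  rwa [add_comm w 1]

lemma exp_abs_le (x : ℝ) : Real.exp |x| ≤ Real.exp x + Real.exp (-x) := by
  rcases abs_cases x with ⟨h, _⟩ | ⟨h, _⟩ <;> rw [h]
  · linarith [Real.exp_pos (-x)]
  · linarith [Real.exp_pos x]

lemma uni_of_dual [NeZero b] (hb : 2 ≤ b) (t : ℕ) (C1 C2 : Matrix (Fin n) (Fin m) (ZMod b))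
    (hC : ∀ k1 k2 : ℕ, k1 < b ^ n → k2 < b ^ n →
          Matrix.mulVec C1.transpose (digitVec b n k1) +
            Matrix.mulVec C2.transpose (digitVec b n k2) = 0 →
          ¬(k1 = 0 ∧ k2 = 0) → 2 * m - t < mu2 b k1 + mu2 b k2) : Uni t C1 C2 := by
  intro j i l hw F hF
  exact EP_eq_EG C1 C2 (fun q => (q : ℕ) < j ∨ (q : ℕ) + 1 = j + i) (fun q => (q : ℕ) < l)
    (fun k1 k2 h1 h2 h => dual_zero hb t C1 C2 hC j i l hw k1 k2 h1 h2 h) F hF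

lemma final_bound [NeZero b] (hb : 2 ≤ b) (p : ℝ) (hp : 1 ≤ p) (t : ℕ) (hm : 1 ≤ m) (ht : t ≤ 2 * m)
    (hn : 2 * m ≤ n) (C1 C2 : Matrix (Fin n) (Fin m) (ZMod b)) (hU : Uni t C1 C2) :
    LpDisc p (digitalNetPoint b m n C1 C2) ≤
      (16 * (b : ℝ) ^ (2 * t + 3) * (p ^ p * Real.exp 1 * (2 * Real.exp (1 / 2))) ^ (1 / p))
        * Real.sqrt m / (b : ℝ) ^ m := by
  have hp0 : 0 < p := by linarith
  have hb1 : (1 : ℝ) ≤ b := by exact_mod_cast (by omega : 1 ≤ b)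
  have hb0 : (0 : ℝ) < b := by linarith
  set B : ℝ := (b : ℝ) ^ (2 * t + 3) with hB
  have hB1 : 1 ≤ B := one_le_pow₀ hb1
  set D : ℝ := (b : ℝ) ^ m with hD
  have hD0 : 0 < D := by positivity
  have hm1 : (1 : ℝ) ≤ m := by exact_mod_cast hm
  have hs1 : 1 ≤ Real.sqrt m := Real.one_le_sqrt.mpr hm1
  have hs0 : 0 < Real.sqrt m := by linarith
  set σ : ℝ := 16 * B * Real.sqrt m / D with hσ
  have hσ0 : 0 < σ := by positivity
  have hex : ∀ Z : ℕ, ∃ δ : ℕ → ℕ → ℝ, Z < b ^ n →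
      ((∀ j < m, ∀ Y, |δ j Y| ≤ 12 * B / D) ∧
      (∀ j < m, ∀ Y, ∑ η ∈ range b, δ j (b * Y + η) = 0) ∧
      ∀ k < b ^ n, |U C1 C2 (fun v w => (if X v n ≤ k then 1 else 0) *
        (if X w n ≤ Z then 1 else 0)) - ∑ j ∈ range m, δ j (k / b ^ (n - (j + 1)))|
          ≤ 14 * B / D) := by
    intro Z
    by_cases hZ : Z < b ^ n
    · obtain ⟨δ, h⟩ := decomp hb t ht hn C1 C2 hU Z hZ
      exact ⟨δ, fun _ => h⟩
    · exact ⟨fun _ _ => 0, fun h => absurd h hZ⟩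
  choose δ hδ using hex
  set M : ℕ → ℕ → ℝ := fun k Z => ∑ j ∈ range m, δ Z j (k / b ^ (n - (j + 1))) with hM
  set K : ℝ := σ ^ p * (p ^ p * Real.exp 1) with hK
  have hK0 : 0 < K := by positivity
  have hNpos : 0 < b ^ n := by positivity
  have hintegr := integral_cells
    (fun y => |discAt (digitalNetPoint b m n C1 C2) y| ^ p)
    (fun y => Real.rpow_nonneg (abs_nonneg _) p)
    (fun k Z => K * (Real.exp (M k Z / σ) + Real.exp (-(M k Z / σ))))
    (fun k Z => by positivity) (b ^ n) hNpos (by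
      intro k hk Z hZ y h1 h2 h3 h4
      have hd := disc_cell (by omega) C1 C2 k Z hk hZ y h1 h2 h3 h4
      obtain ⟨-, -, h⟩ := hδ Z hZ
      have h := h k hk
      have hle : |discAt (digitalNetPoint b m n C1 C2) y| ≤ σ * (|M k Z / σ| + 1) := by
        rw [abs_div, abs_of_pos hσ0, mul_add, mul_div_cancel₀ _ hσ0.ne', mul_one]
        have h5 : 14 * B / D + 2 / D ≤ σ := by
          rw [hσ, ← add_div]
          gcongr
          nlinarith [mul_le_mul hB1 hs1 zero_le_one (by linarith)]
        have h6 := abs_sub_abs_le_abs_sub (U C1 C2 (fun v w => (if X v n ≤ k then 1 else 0) *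
          (if X w n ≤ Z then 1 else 0))) (M k Z)
        linarith
      calc |discAt (digitalNetPoint b m n C1 C2) y| ^ p
          ≤ (σ * (|M k Z / σ| + 1)) ^ p := Real.rpow_le_rpow (abs_nonneg _) hle hp0.le
        _ = σ ^ p * (|M k Z / σ| + 1) ^ p := Real.mul_rpow hσ0.le (by positivity)
        _ ≤ σ ^ p * (p ^ p * Real.exp (1 + |M k Z / σ|)) := by
            gcongr
            exact pow_le_exp p hp _ (abs_nonneg _)
        _ = K * Real.exp |M k Z / σ| := by rw [Real.exp_add, hK]; ring
        _ ≤ _ := by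
            gcongr
            exact exp_abs_le _)
  have haz : ∀ s : ℝ, |s| = 1 → ∀ Z < b ^ n,
      ∑ k ∈ range (b ^ n), Real.exp (s * (M k Z / σ)) ≤ (b : ℝ) ^ n * Real.exp (1 / 2) := by
    intro s hs Z hZ
    obtain ⟨g1, g2, -⟩ := hδ Z hZ
    have := azuma' b (by omega) (1 / Real.sqrt m) (by positivity)
      (fun j Y => s * (δ Z j Y / σ)) m n (by omega)
      (by
        intro j hj Y
        rw [abs_mul, hs, one_mul, abs_div, abs_of_pos hσ0, div_le_iff₀ hσ0]
        refine (g1 j hj Y).trans ?_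
        rw [hσ]
        have : 1 / Real.sqrt m * (16 * B * Real.sqrt m / D) = 16 * B / D := by
          field_simp
        rw [this]
        gcongr
        norm_num)
      (by
        intro j hj Y
        rw [← mul_sum, ← sum_div, g2 j hj Y]
        simp)
    have e : (m : ℝ) * (1 / Real.sqrt m) ^ 2 / 2 = 1 / 2 := by
      rw [div_pow, Real.sq_sqrt (by linarith)]
      field_simp
    rw [e] at this
    refine le_trans (le_of_eq ?_) this
    apply sum_congr rfl
    intro k _
    rw [hM, sum_div, mul_sum]
  have hfin : ∫ y in (Set.Ico (0:ℝ) 1) ×ˢ (Set.Ico (0:ℝ) 1),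
      |discAt (digitalNetPoint b m n C1 C2) y| ^ p ≤ K * (2 * Real.exp (1 / 2)) := by
    refine hintegr.trans ?_
    rw [div_le_iff₀ (by positivity)]
    have : ∀ Z ∈ range (b ^ n), ∑ k ∈ range (b ^ n),
        K * (Real.exp (M k Z / σ) + Real.exp (-(M k Z / σ)))
        ≤ K * (2 * Real.exp (1 / 2)) * (b : ℝ) ^ n := by
      intro Z hZ
      rw [mem_range] at hZ
      have a1 := haz 1 (by simp) Z hZ
      have a2 := haz (-1) (by simp) Z hZ
      simp only [one_mul, neg_mul] at a1 a2
      rw [← mul_sum, sum_add_distrib, mul_assoc K (2 * Real.exp (1 / 2))]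
      refine mul_le_mul_of_nonneg_left ?_ hK0.le
      linarith
    refine (sum_le_sum this).trans (le_of_eq ?_)
    rw [sum_const, card_range, nsmul_eq_mul]
    push_cast
    ring
  unfold LpDisc
  refine (Real.rpow_le_rpow (integral_nonneg fun y => Real.rpow_nonneg (abs_nonneg _) p) hfin
    (by positivity)).trans (le_of_eq ?_)
  rw [hK, mul_assoc (σ ^ p), Real.mul_rpow (by positivity) (by positivity), ← Real.rpow_mul hσ0.le,
    mul_one_div_cancel hp0.ne', Real.rpow_one, hσ]
  ring

end DickNet

/-- For every integer `b ≥ 2`, every real `1 ≤ p < ∞` and every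
`t ∈ ℕ`, there is a constant `C > 0` (depending only on `b`, `p` and `t`) such that
for all `m, n ∈ ℕ` with `m ≥ 1`, `t ≤ 2m` and `n ≥ 2m`, and all `n × m` matrices
`C₁, C₂` over `ZMod b` whose dual net only contains pairs `(k₁, k₂) ≠ (0, 0)` with
`μ₂(k₁) + μ₂(k₂) > 2m - t`, the two-dimensional digital net `P` generated by `C₁, C₂`
satisfies `L_p(P) ≤ C · √m / bᵐ`. -/
theorem lp_discrepancy_of_min_dick_weight (b : ℕ) (hb : 2 ≤ b) (p : ℝ) (hp : 1 ≤ p)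
    (t : ℕ) :
    ∃ C : ℝ, 0 < C ∧ ∀ m n : ℕ, 1 ≤ m → t ≤ 2 * m → 2 * m ≤ n →
      ∀ C1 C2 : Matrix (Fin n) (Fin m) (ZMod b),
        (∀ k1 k2 : ℕ, k1 < b ^ n → k2 < b ^ n →
          Matrix.mulVec C1.transpose (digitVec b n k1) +
            Matrix.mulVec C2.transpose (digitVec b n k2) = 0 →
          ¬(k1 = 0 ∧ k2 = 0) → 2 * m - t < mu2 b k1 + mu2 b k2) →
        LpDisc p (digitalNetPoint b m n C1 C2) ≤ C * Real.sqrt m / (b : ℝ) ^ m := by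
  have hb0 : (0 : ℝ) < b := by exact_mod_cast (by omega : 0 < b)
  have hp0 : 0 < p := by linarith
  have : NeZero b := ⟨by omega⟩
  refine ⟨16 * (b : ℝ) ^ (2 * t + 3) *
    (p ^ p * Real.exp 1 * (2 * Real.exp (1 / 2))) ^ (1 / p), by positivity, ?_⟩
  intro m n hm ht hn C1 C2 hC
  exact DickNet.final_bound hb p hp t hm ht hn C1 C2 (DickNet.uni_of_dual hb t C1 C2 hC)
end
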